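/- arXiv:2306.17813 — 4 statements merged into one kernel-verified Lean document; each statement's English description precedes it below -/
import Mathlib

section
/- Let n ∈ ℕ and let a₁, …, aₙ be positive real numbers. Suppose that either aᵢ ≥ 1 for all 1 ≤ i ≤ n, or a₁ + ⋯ + aₙ < 1. Then for all real s, t with n + 1 < s < t, the Hausdorff dimension of the set {α ∈ [s, t] : the equation y = a₁x₁ + ⋯ + aₙxₙ has infinitely many non-trivial solutions (y, x₁, …, xₙ) ∈ PS(α)^{n+1}} is at most (n + 1)/s. -/
open MeasureTheory

/-- The Piatetski–Shapiro set `PS(α) = {⌊n^α⌋ : n ∈ ℕ, n ≥ 1}`. -/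
def PS (α : ℝ) : Set ℤ := {m : ℤ | ∃ n : ℕ, 1 ≤ n ∧ m = ⌊(n : ℝ) ^ α⌋}
open Filter Topology ENNReal

lemma bc_haus {ι : Type} [Countable ι] (E : ι → Set ℝ) (δ : ℝ) (hδ : 0 < δ)
    (h : ∑' i, Metric.ediam (E i) ^ δ ≠ ⊤) :
    Measure.hausdorffMeasure δ {x : ℝ | {i | x ∈ E i}.Infinite} ≠ ⊤ := by
  have hT := ENNReal.tendsto_tsum_compl_atTop_zero h
  have key := Measure.hausdorffMeasure_le_liminf_tsum (X := ℝ)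
    (ι := fun F : Finset ι => {i // i ∉ F}) δ {x : ℝ | {i | x ∈ E i}.Infinite} (l := atTop)
    (fun F => (∑' i : {i // i ∉ F}, Metric.ediam (E i) ^ δ) ^ (1 / δ))
    (by
      have := hT.ennrpow_const (1/δ)
      rwa [ENNReal.zero_rpow_of_pos (by positivity)] at this)
    (fun F i => E i)
    (by
      refine Eventually.of_forall fun F i => ?_
      have := ENNReal.le_tsum (f := fun i : {i // i ∉ F} => Metric.ediam (E i) ^ δ) i
      rw [one_div, ENNReal.le_rpow_inv_iff hδ]
      exact this)
    (by
      refine Eventually.of_forall fun F x hx => ?_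
      obtain ⟨i, hi, hiF⟩ := Set.Infinite.exists_notMem_finset hx F
      exact Set.mem_iUnion.2 ⟨⟨i, hiF⟩, hi⟩)
  rw [hT.liminf_eq] at key
  exact ne_top_of_le_ne_top (by simp) key

lemma key_haus (n : ℕ) (E : ℕ → (Fin n → ℕ) → Set ℝ) (V : ℕ → (Fin n → ℕ) → ℝ)
    (T : ℕ → Finset ℕ) (δ p C : ℝ) (hδ : 0 < δ) (hp : p < -1)
    (hV0 : ∀ m k, k ∈ Fintype.piFinset (fun _ : Fin n => T m) → 0 ≤ V m k)
    (hE : ∀ m k x y, x ∈ E m k → y ∈ E m k → x < y → (y - x) ^ δ ≤ V m k)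
    (hT : ∀ m k x, x ∈ E m k → k ∈ Fintype.piFinset (fun _ : Fin n => T m))
    (hS : ∀ m, ∑ k ∈ Fintype.piFinset (fun _ : Fin n => T m), V m k ≤ C * (m : ℝ) ^ p) :
    Measure.hausdorffMeasure δ
      {x : ℝ | {i : ℕ × (Fin n → ℕ) | x ∈ E i.1 i.2}.Infinite} ≠ ⊤ := by
  apply bc_haus (fun i : ℕ × (Fin n → ℕ) => E i.1 i.2) δ hδ
  have hsum : Summable (fun m : ℕ => C * (m : ℝ) ^ p) :=
    (Real.summable_nat_rpow.2 hp).mul_left C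
  refine ne_top_of_le_ne_top hsum.tsum_ofReal_ne_top ?_
  rw [ENNReal.tsum_prod (f := fun m k => Metric.ediam (E m k) ^ δ)]
  refine ENNReal.tsum_le_tsum fun m => ?_
  rw [tsum_eq_sum (s := Fintype.piFinset (fun _ : Fin n => T m))]
  · refine le_trans ?_ (ENNReal.ofReal_le_ofReal (hS m))
    rw [ENNReal.ofReal_sum_of_nonneg (fun k hk => hV0 m k hk)]
    refine Finset.sum_le_sum fun k hk => ?_
    have h0 := hV0 m k hk
    rw [← ENNReal.le_rpow_inv_iff hδ, ENNReal.ofReal_rpow_of_nonneg h0 (by positivity)]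
    apply Metric.ediam_le_of_forall_dist_le
    have main : ∀ x y, x ∈ E m k → y ∈ E m k → x < y → y - x ≤ V m k ^ δ⁻¹ := by
      intro x y hx hy hxy
      rw [Real.le_rpow_inv_iff_of_pos (by linarith) h0 hδ]
      exact hE m k x y hx hy hxy
    intro x hx y hy
    rw [Real.dist_eq]
    rcases lt_trichotomy x y with h | h | h
    · rw [abs_sub_comm, abs_of_pos (by linarith)]; exact main x y hx hy h
    · subst h; simp; positivity
    · rw [abs_of_pos (by linarith)]; exact main y x hy hx h
  · intro k hk
    have : E m k = ∅ := by
      ext x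
      simp only [Set.mem_empty_iff_false, iff_false]
      exact fun hx => hk (hT m k x hx)
    simp [this, hδ]

lemma sum_pow_neg (δ : ℝ) (h0 : 0 < δ) (h1 : δ < 1) (m : ℕ) :
    ∑ j ∈ Finset.range m, ((j : ℝ) + 1) ^ (-δ) ≤ (m : ℝ) ^ (1 - δ) / (1 - δ) := by
  have hd : 0 < 1 - δ := by linarith
  induction m with
  | zero => simp [hd.ne']
  | succ m ih =>
    rw [Finset.sum_range_succ]
    have hm : (0 : ℝ) < m + 1 := by positivity
    have hB := rpow_one_add_le_one_add_mul_self (s := -(1 / ((m : ℝ) + 1)))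
      (by rw [neg_le_neg_iff, div_le_one hm]; linarith [Nat.cast_nonneg (α := ℝ) m])
      hd.le (by linarith : 1 - δ ≤ 1)
    have e1 : (m : ℝ) = (m + 1) * (1 + -(1 / ((m : ℝ) + 1))) := by field_simp; ring
    have e2 : (m : ℝ) ^ (1 - δ) = ((m : ℝ) + 1) ^ (1 - δ) * (1 + -(1 / ((m : ℝ) + 1))) ^ (1 - δ) := by
      rw [← Real.mul_rpow hm.le, ← e1]
      rw [← sub_eq_add_neg, sub_nonneg, div_le_one hm]; linarith [Nat.cast_nonneg (α := ℝ) m]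
    have e3 : ((m : ℝ) + 1) ^ (-δ) = ((m : ℝ) + 1) ^ (1 - δ) * (1 / ((m : ℝ) + 1)) := by
      rw [show -δ = (1 - δ) - 1 by ring, Real.rpow_sub_one hm.ne']; ring
    have hpos : 0 < ((m : ℝ) + 1) ^ (1 - δ) := by positivity
    have e4 := mul_le_mul_of_nonneg_left hB hpos.le
    rw [← e2] at e4
    push_cast
    calc _ ≤ (m : ℝ) ^ (1 - δ) / (1 - δ) + ((m : ℝ) + 1) ^ (-δ) := by gcongr
      _ ≤ _ := by
        rw [le_div_iff₀ hd, add_mul, div_mul_cancel₀ _ hd.ne', e3]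
        linarith

lemma sum_coord (n : ℕ) (i : Fin n) (m : ℕ) (f : ℕ → ℝ) :
    ∑ k ∈ Fintype.piFinset (fun _ : Fin n => Finset.range m), f (k i) =
      (m : ℝ) ^ (n - 1) * ∑ j ∈ Finset.range m, f j := by
  have := Finset.prod_univ_sum (fun _ : Fin n => Finset.range m)
    (fun x j => if x = i then f j else 1)
  have h2 : ∀ k : Fin n → ℕ, ∏ x, (if x = i then f (k x) else 1) = f (k i) := by
    intro k; simp
  simp only [h2] at this
  rw [← this, ← Finset.mul_prod_erase Finset.univ _ (Finset.mem_univ i)]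
  rw [Finset.prod_congr rfl (g := fun _ => (m : ℝ))]
  · simp [mul_comm]
  · intro x hx
    simp [Finset.ne_of_mem_erase hx]

lemma approx_rel {n : ℕ} (a : Fin n → ℝ) (ha : ∀ i, 0 < a i) (s α : ℝ) (hsα : s ≤ α)
    (m : ℕ) (hm : 1 ≤ m) (k : Fin n → ℕ)
    (h : ((⌊(m : ℝ) ^ α⌋ : ℤ) : ℝ) = ∑ i, a i * ((⌊(k i : ℝ) ^ α⌋ : ℤ) : ℝ)) :
    |1 - ∑ i, a i * ((k i : ℝ) / m) ^ α| ≤ (1 + ∑ i, a i) * (m : ℝ) ^ (-s) := by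
  have hm1 : (1 : ℝ) ≤ m := by exact_mod_cast hm
  have hm0 : (0 : ℝ) < m := by linarith
  have hM : 0 < (m : ℝ) ^ α := by positivity
  have e1 : ∑ i, a i * ((k i : ℝ) / m) ^ α = (∑ i, a i * (k i : ℝ) ^ α) / (m : ℝ) ^ α := by
    rw [Finset.sum_div]
    refine Finset.sum_congr rfl fun i _ => ?_
    rw [Real.div_rpow (by positivity) hm0.le]; ring
  have l1 := Int.floor_le ((m : ℝ) ^ α)
  have l2 := Int.lt_floor_add_one ((m : ℝ) ^ α)
  have u1 : ∑ i, a i * ((⌊(k i : ℝ) ^ α⌋ : ℤ) : ℝ) ≤ ∑ i, a i * (k i : ℝ) ^ α :=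
    Finset.sum_le_sum fun i _ => mul_le_mul_of_nonneg_left (Int.floor_le _) (ha i).le
  have u2 : ∑ i, a i * (k i : ℝ) ^ α ≤ ∑ i, a i * ((⌊(k i : ℝ) ^ α⌋ : ℤ) : ℝ) + ∑ i, a i := by
    rw [← Finset.sum_add_distrib]
    refine Finset.sum_le_sum fun i _ => ?_
    have := mul_le_mul_of_nonneg_left (Int.lt_floor_add_one ((k i : ℝ) ^ α)).le (ha i).le
    linarith
  have hA : 0 ≤ ∑ i, a i := Finset.sum_nonneg fun i _ => (ha i).le
  have e2 : 1 - ∑ i, a i * ((k i : ℝ) / m) ^ α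
      = ((m : ℝ) ^ α - ∑ i, a i * (k i : ℝ) ^ α) * (m : ℝ) ^ (-α) := by
    rw [e1, Real.rpow_neg hm0.le]; field_simp
  rw [e2, abs_mul, abs_of_pos (by positivity : 0 < (m : ℝ) ^ (-α))]
  have e3 : (m : ℝ) ^ (-α) ≤ (m : ℝ) ^ (-s) :=
    Real.rpow_le_rpow_of_exponent_le hm1 (by linarith)
  refine mul_le_mul ?_ e3 (by positivity) (by linarith)
  rw [abs_le]
  constructor <;> linarith

/-- Separation in the case of decreasing terms. -/
lemma sep_one {n : ℕ} (a : Fin n → ℝ) (ha : ∀ i, 0 < a i) (r : Fin n → ℝ)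
    (hr : ∀ i, 0 < r i) (i₀ : Fin n) (hmax : ∀ i, r i ≤ r i₀) (α β ε : ℝ) (hab : α < β)
    (hε : ε ≤ 1 / 2) (h1 : r i₀ ≤ 1)
    (hα : |1 - ∑ i, a i * r i ^ α| ≤ ε) (hβ : |1 - ∑ i, a i * r i ^ β| ≤ ε) :
    (β - α) * (1 - r i₀) ≤ 4 * ε := by
  rw [abs_le] at hα hβ
  set R := r i₀
  have hR : 0 < R := hr i₀
  have hle : ∑ i, a i * r i ^ β ≤ R ^ (β - α) * ∑ i, a i * r i ^ α := by
    rw [Finset.mul_sum]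
    refine Finset.sum_le_sum fun i _ => ?_
    have : r i ^ β = r i ^ (β - α) * r i ^ α := by
      rw [← Real.rpow_add (hr i)]; congr 1; ring
    rw [this]
    have h2 : r i ^ (β - α) ≤ R ^ (β - α) :=
      Real.rpow_le_rpow (hr i).le (hmax i) (by linarith)
    have h3 : 0 ≤ a i * r i ^ α := mul_nonneg (ha i).le (Real.rpow_nonneg (hr i).le _)
    nlinarith [mul_le_mul_of_nonneg_right h2 h3]
  have h3 : 1 + (β - α) * (1 - R) ≤ R ^ (-(β - α)) := by
    rw [Real.rpow_def_of_pos hR]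
    have h4 := Real.add_one_le_exp (Real.log R * -(β - α))
    have h5 := Real.log_le_sub_one_of_pos hR
    nlinarith
  have h6 : R ^ (-(β - α)) * ∑ i, a i * r i ^ β ≤ ∑ i, a i * r i ^ α := by
    have := mul_le_mul_of_nonneg_left hle (Real.rpow_nonneg hR.le (-(β - α)))
    rwa [← mul_assoc, ← Real.rpow_add hR, neg_add_cancel, Real.rpow_zero, one_mul] at this
  have hg : 1 / 2 ≤ ∑ i, a i * r i ^ β := by linarith
  have h7 := mul_le_mul_of_nonneg_right h3 (by linarith : 0 ≤ ∑ i, a i * r i ^ β)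
  have h8 : 0 ≤ (β - α) * (1 - R) := mul_nonneg (by linarith) (by linarith)
  nlinarith [mul_le_mul_of_nonneg_left hg h8]

/-- Separation in the case of small coefficient sum. -/
lemma sep_two {n : ℕ} (a : Fin n → ℝ) (ha : ∀ i, 0 < a i) (r : Fin n → ℝ)
    (hr : ∀ i, 0 < r i) (α β ε t : ℝ) (hα0 : 0 < α) (hab : α < β) (hβt : β ≤ t)
    (hA : ∑ i, a i < 1) (hε : ε ≤ (1 - ∑ i, a i) / 2)
    (hα : |1 - ∑ i, a i * r i ^ α| ≤ ε) (hβ : |1 - ∑ i, a i * r i ^ β| ≤ ε) :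
    β - α ≤ (4 * t / (1 - ∑ i, a i)) * ε := by
  rw [abs_le] at hα hβ
  have hlow : ∑ i, a i * r i ^ α + (β - α) / α * ∑ i, (a i * r i ^ α - a i)
      ≤ ∑ i, a i * r i ^ β := by
    rw [Finset.mul_sum, ← Finset.sum_add_distrib]
    refine Finset.sum_le_sum fun i _ => ?_
    have hu : 0 < r i ^ α := Real.rpow_pos_of_pos (hr i) _
    have e1 : r i ^ β = r i ^ α * r i ^ (β - α) := by
      rw [← Real.rpow_add (hr i)]; congr 1; ring
    have e2 : 1 + (β - α) * Real.log (r i) ≤ r i ^ (β - α) := by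
      rw [Real.rpow_def_of_pos (hr i)]
      linarith [Real.add_one_le_exp (Real.log (r i) * (β - α))]
    have e3 : r i ^ α - 1 ≤ r i ^ α * (α * Real.log (r i)) := by
      rw [← Real.log_rpow (hr i)]
      have := Real.one_sub_inv_le_log_of_pos hu
      have h2 := mul_le_mul_of_nonneg_left this hu.le
      rw [mul_sub, mul_inv_cancel₀ hu.ne'] at h2
      linarith
    have e4 : (β - α) / α * (r i ^ α - 1) ≤ r i ^ α * ((β - α) * Real.log (r i)) := by
      have := mul_le_mul_of_nonneg_left e3 (div_pos (sub_pos.2 hab) hα0).le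
      calc _ ≤ _ := this
        _ = _ := by field_simp
    have e5 : r i ^ α + (β - α) / α * (r i ^ α - 1) ≤ r i ^ β := by
      rw [e1]
      have := mul_le_mul_of_nonneg_left e2 hu.le
      linarith
    have := mul_le_mul_of_nonneg_left e5 (ha i).le
    linarith
  rw [Finset.sum_sub_distrib] at hlow
  set A := ∑ i, a i
  have hq : 0 < (β - α) / α := div_pos (sub_pos.2 hab) hα0
  have h1 : (1 - A) / 2 ≤ ∑ i, a i * r i ^ α - A := by linarith
  have h2 := mul_le_mul_of_nonneg_left h1 hq.le
  have h3 : (β - α) / α * ((1 - A) / 2) ≤ 2 * ε := by linarith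
  have h4 : (β - α) / t ≤ (β - α) / α := by
    apply div_le_div_of_nonneg_left <;> linarith
  have ht : 0 < t := by linarith
  have h5 : (β - α) / t * ((1 - A) / 2) ≤ 2 * ε :=
    (mul_le_mul_of_nonneg_right h4 (by linarith)).trans h3
  have hA' : 0 < 1 - A := by linarith
  rw [div_mul_eq_mul_div, le_div_iff₀ hA']
  rw [div_mul_eq_mul_div, div_le_iff₀ ht] at h5
  linarith

lemma lt_case_one {n : ℕ} (a : Fin n → ℝ) (ha1 : ∀ i, 1 ≤ a i) (y : ℤ) (x : Fin n → ℤ)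
    (hx : ∀ i, 1 ≤ x i) (h : (y : ℝ) = ∑ i, a i * (x i : ℝ))
    (hnt : ¬(∑ i, a i = 1 ∧ ∀ i, x i = y)) (i : Fin n) : x i < y := by
  by_contra hlt
  push Not at hlt
  have hx' : ∀ i, (1 : ℝ) ≤ x i := fun i => by exact_mod_cast hx i
  have hle : ∀ j ∈ Finset.univ, (if j = i then (x j : ℝ) else 0) ≤ a j * x j := by
    intro j _
    split_ifs
    · nlinarith [ha1 j, hx' j]
    · nlinarith [ha1 j, hx' j]
  have hs : ∑ j, (if j = i then (x j : ℝ) else 0) = x i := by simp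
  have hlt' : (y : ℝ) ≤ x i := by exact_mod_cast hlt
  have heq : ∑ j, (if j = i then (x j : ℝ) else 0) = ∑ j, a j * x j :=
    le_antisymm (Finset.sum_le_sum hle) (by rw [hs, ← h]; exact hlt')
  have hall := (Finset.sum_eq_sum_iff_of_le hle).1 heq
  have huniq : ∀ j, j = i := by
    intro j
    by_contra hj
    have := hall j (Finset.mem_univ _)
    rw [if_neg hj] at this
    nlinarith [ha1 j, hx' j]
  have hai : a i = 1 := by
    have := hall i (Finset.mem_univ _)
    rw [if_pos rfl] at this
    nlinarith [ha1 i, hx' i]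
  apply hnt
  constructor
  · rw [Fintype.sum_eq_single i (fun j hj => absurd (huniq j) hj), hai]
  · intro j
    rw [huniq j]
    rw [← heq, hs] at h
    exact_mod_cast h.symm

lemma floor_pos_aux (α : ℝ) (hα : 0 ≤ α) (k : ℕ) (hk : 1 ≤ k) : 1 ≤ ⌊(k : ℝ) ^ α⌋ := by
  rw [Int.le_floor]
  simpa using Real.one_le_rpow (by exact_mod_cast hk : (1 : ℝ) ≤ k) hα

lemma le_case_two {n : ℕ} (a : Fin n → ℝ) (ha : ∀ i, 0 < a i) (α : ℝ) (hα : 1 ≤ α)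
    (B : ℕ) (hB : 1 ≤ B) (hB' : ∀ i, 2 / a i ≤ B) (m : ℕ) (k : Fin n → ℕ) (hk : ∀ i, 1 ≤ k i)
    (h : ((⌊(m : ℝ) ^ α⌋ : ℤ) : ℝ) = ∑ i, a i * ((⌊(k i : ℝ) ^ α⌋ : ℤ) : ℝ)) (i : Fin n) :
    k i ≤ B * m := by
  have hx : ∀ i, (1 : ℝ) ≤ (⌊(k i : ℝ) ^ α⌋ : ℤ) := fun i => by
    exact_mod_cast floor_pos_aux α (by linarith) (k i) (hk i)
  have h1 : a i * ((⌊(k i : ℝ) ^ α⌋ : ℤ) : ℝ) ≤ (m : ℝ) ^ α := by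
    refine le_trans ?_ (Int.floor_le ((m : ℝ) ^ α))
    rw [h]
    exact Finset.single_le_sum (f := fun i => a i * ((⌊(k i : ℝ) ^ α⌋ : ℤ) : ℝ))
      (fun j _ => mul_nonneg (ha j).le (by linarith [hx j])) (Finset.mem_univ i)
  have h2 := Int.lt_floor_add_one ((k i : ℝ) ^ α)
  have h3 : (k i : ℝ) ^ α ≤ B * (m : ℝ) ^ α := by
    have h4 : a i * (k i : ℝ) ^ α ≤ 2 * (m : ℝ) ^ α := by
      have := mul_le_mul_of_nonneg_left (h2.le.trans
        (by linarith [hx i] : _ ≤ 2 * ((⌊(k i : ℝ) ^ α⌋ : ℤ) : ℝ))) (ha i).le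
      linarith
    calc (k i : ℝ) ^ α ≤ 2 * (m : ℝ) ^ α / a i := by
          rw [le_div_iff₀ (ha i)]; linarith
      _ = 2 / a i * (m : ℝ) ^ α := by ring
      _ ≤ _ := mul_le_mul_of_nonneg_right (hB' i) (by positivity)
  have hBr : (1 : ℝ) ≤ B := by exact_mod_cast hB
  have h5 : (k i : ℝ) ^ α ≤ ((B : ℝ) * m) ^ α := by
    rw [Real.mul_rpow (by positivity) (by positivity)]
    refine h3.trans (mul_le_mul_of_nonneg_right ?_ (by positivity))
    simpa using Real.rpow_le_rpow_of_exponent_le hBr hα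
  have h6 := (Real.rpow_le_rpow_iff (by positivity) (by positivity) (by linarith)).1 h5
  exact_mod_cast h6

lemma lt_of_floor (α : ℝ) (hα : 0 ≤ α) (k m : ℕ) (h : ⌊(k : ℝ) ^ α⌋ < ⌊(m : ℝ) ^ α⌋) : k < m := by
  by_contra hc
  push Not at hc
  have : ⌊(m : ℝ) ^ α⌋ ≤ ⌊(k : ℝ) ^ α⌋ :=
    Int.floor_le_floor (Real.rpow_le_rpow (by positivity) (by exact_mod_cast hc) hα)
  omega

lemma ex_large (A s η : ℝ) (hs : 0 < s) (hη : 0 < η) :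
    ∃ M : ℕ, 1 ≤ M ∧ ∀ m : ℕ, M ≤ m → A * (m : ℝ) ^ (-s) ≤ η := by
  have h := ((tendsto_rpow_neg_atTop hs).comp tendsto_natCast_atTop_atTop).const_mul A
  rw [mul_zero] at h
  obtain ⟨M, hM⟩ := eventually_atTop.1 (h.eventually_lt_const hη)
  exact ⟨max M 1, le_max_right _ _, fun m hm => (hM m (le_trans (le_max_left _ _) hm)).le⟩

/-- Exponents for which a given tuple of bases yields a non-trivial solution. -/
def solE {n : ℕ} (a : Fin n → ℝ) (s t : ℝ) (M : ℕ) (m : ℕ) (k : Fin n → ℕ) : Set ℝ :=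
  {α | α ∈ Set.Icc s t ∧ M ≤ m ∧ (∀ i, 1 ≤ k i) ∧
    ((⌊(m : ℝ) ^ α⌋ : ℤ) : ℝ) = ∑ i, a i * ((⌊(k i : ℝ) ^ α⌋ : ℤ) : ℝ) ∧
    ¬(∑ i, a i = 1 ∧ ∀ i, ⌊(k i : ℝ) ^ α⌋ = ⌊(m : ℝ) ^ α⌋)}

lemma ex_B {n : ℕ} (a : Fin n → ℝ) (ha : ∀ i, 0 < a i) :
    ∃ B : ℕ, 1 ≤ B ∧ ∀ i, 2 / a i ≤ B := by
  obtain ⟨B, hB⟩ := exists_nat_ge (1 + ∑ i, 2 / a i)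
  have hpos : ∀ i, 0 ≤ 2 / a i := fun i => (div_pos two_pos (ha i)).le
  refine ⟨B, ?_, fun i => ?_⟩
  · have : (1 : ℝ) ≤ B := by linarith [Finset.sum_nonneg (s := Finset.univ) fun i _ => hpos i]
    exact_mod_cast this
  · have := Finset.single_le_sum (f := fun i => 2 / a i) (fun j _ => hpos j) (Finset.mem_univ i)
    linarith

lemma red_sub {n : ℕ} (a : Fin n → ℝ) (ha : ∀ i, 0 < a i) (s t : ℝ) (hs : 1 ≤ s) (M : ℕ) :
    {α ∈ Set.Icc s t |
      {sol : ℤ × (Fin n → ℤ) |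
        sol.1 ∈ PS α ∧ (∀ i, sol.2 i ∈ PS α) ∧
        (sol.1 : ℝ) = ∑ i, a i * (sol.2 i : ℝ) ∧
        ¬(∑ i, a i = 1 ∧ ∀ i, sol.2 i = sol.1)}.Infinite} ⊆
    {x : ℝ | {i : ℕ × (Fin n → ℕ) | x ∈ solE a s t M i.1 i.2}.Infinite} := by
  rintro α ⟨hα, hinf⟩
  obtain ⟨B, hB, hB'⟩ := ex_B a ha
  have hF : {i : ℕ × (Fin n → ℕ) | α ∈ solE a s t 0 i.1 i.2}.Infinite := by
    intro hfin
    apply hinf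
    refine (hfin.image (fun i => ((⌊(i.1 : ℝ) ^ α⌋, fun j => ⌊(i.2 j : ℝ) ^ α⌋) :
      ℤ × (Fin n → ℤ)))).subset ?_
    rintro ⟨y, x⟩ ⟨⟨m, hm, hy⟩, hx, hrel, hnt⟩
    choose k hk hxk using hx
    simp only at hy hxk hrel hnt
    obtain rfl : x = fun j => ⌊(k j : ℝ) ^ α⌋ := funext hxk
    subst hy
    exact ⟨(m, k), ⟨hα, Nat.zero_le _, hk, hrel, hnt⟩, rfl⟩
  have hfin2 : ((Finset.range M ×ˢ Fintype.piFinset (fun _ : Fin n => Finset.range (B * M + 1)) :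
    Finset (ℕ × (Fin n → ℕ))) : Set (ℕ × (Fin n → ℕ))).Finite := Finset.finite_toSet _
  refine (hF.sdiff hfin2).mono ?_
  rintro ⟨m, k⟩ ⟨⟨h1, _, h3, h4, h5⟩, hnot⟩
  refine ⟨h1, ?_, h3, h4, h5⟩
  by_contra hlt
  simp only [not_le] at hlt
  apply hnot
  simp only [Finset.coe_product, Set.mem_prod, Finset.mem_coe, Finset.mem_range,
    Fintype.mem_piFinset]
  refine ⟨hlt, fun i => ?_⟩
  have := le_case_two a ha α (hs.trans h1.1) B hB hB' m k h3 h4 i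
  have h6 := Nat.mul_le_mul_left B hlt.le
  omega

lemma case_one {n : ℕ} (hn : 1 ≤ n) (a : Fin n → ℝ) (ha : ∀ i, 1 ≤ a i) (s t : ℝ)
    (hs : 1 ≤ s) (δ : ℝ) (h0 : 0 < δ) (h1 : δ < 1) (hδ : (n : ℝ) - s * δ < -1) :
    ∃ M : ℕ, Measure.hausdorffMeasure δ
      {x : ℝ | {i : ℕ × (Fin n → ℕ) | x ∈ solE a s t M i.1 i.2}.Infinite} ≠ ⊤ := by
  have ha0 : ∀ i, 0 < a i := fun i => by linarith [ha i]
  obtain ⟨M, hM1, hM⟩ := ex_large (1 + ∑ i, a i) s (1 / 2) (by linarith) (by norm_num)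
  have hA : 0 ≤ ∑ i, a i := Finset.sum_nonneg fun i _ => (ha0 i).le
  set C : ℝ := 4 * (1 + ∑ i, a i) with hC
  have hC0 : 0 < C := by positivity
  clear_value C
  have hlt : ∀ m k x, x ∈ solE a s t M m k → ∀ i, k i < m := by
    intro m k x hx i
    obtain ⟨hx1, hx2, hx3, hx4, hx5⟩ := hx
    have hx0 : 0 ≤ x := by linarith [hx1.1]
    exact lt_of_floor x hx0 _ _ (lt_case_one a ha _ (fun i => ⌊(k i : ℝ) ^ x⌋)
      (fun i => floor_pos_aux x hx0 _ (hx3 i)) hx4 hx5 i)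
  refine ⟨M, key_haus n (solE a s t M)
    (fun m k => ∑ i, C ^ δ * (m : ℝ) ^ (δ - s * δ) * ((m : ℝ) - k i) ^ (-δ))
    (fun m => Finset.range m) δ (n - s * δ) (n * (C ^ δ / (1 - δ))) h0 hδ ?_ ?_ ?_ ?_⟩
  · intro m k hk
    refine Finset.sum_nonneg fun i _ => ?_
    have : (k i : ℝ) ≤ m := by
      exact_mod_cast (Finset.mem_range.1 (Fintype.mem_piFinset.1 hk i)).le
    have h2 : 0 ≤ (m : ℝ) - k i := by linarith
    positivity
  · intro m k x y hx hy hxy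
    have hk := hlt m k x hx
    obtain ⟨hx1, hx2, hx3, hx4, hx5⟩ := hx
    obtain ⟨hy1, hy2, hy3, hy4, hy5⟩ := hy
    have hm : 1 ≤ m := hM1.trans hx2
    have hm0 : (0 : ℝ) < m := by exact_mod_cast hm
    have : Nonempty (Fin n) := ⟨⟨0, hn⟩⟩
    obtain ⟨i₀, hi₀⟩ := Finite.exists_max k
    have hki : ∀ i, (k i : ℝ) < m := fun i => by exact_mod_cast hk i
    have hsep := sep_one a ha0 (fun i => (k i : ℝ) / m)
      (fun i => div_pos (by exact_mod_cast hx3 i) hm0) i₀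
      (fun i => by
        have : (k i : ℝ) ≤ k i₀ := by exact_mod_cast hi₀ i
        gcongr) x y _ hxy (hM m hx2)
      (by rw [div_le_one hm0]; exact (hki i₀).le)
      (approx_rel a ha0 s x hx1.1 m hm k hx4) (approx_rel a ha0 s y hy1.1 m hm k hy4)
    have hd : 0 < (m : ℝ) - k i₀ := by linarith [hki i₀]
    have hb : y - x ≤ C * ((m : ℝ) ^ (1 - s) * ((m : ℝ) - k i₀)⁻¹) := by
      have e1 : 1 - (k i₀ : ℝ) / m = ((m : ℝ) - k i₀) / m := by field_simp
      simp only [e1] at hsep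
      rw [← mul_assoc, ← div_eq_mul_inv, le_div_iff₀ hd,
        show 1 - s = -s + 1 by ring, Real.rpow_add_one hm0.ne']
      rw [← mul_div_assoc, div_le_iff₀ hm0] at hsep
      rw [hC]; linarith
    have hb2 := Real.rpow_le_rpow (by linarith) hb h0.le
    refine hb2.trans ?_
    have e2 : (C * ((m : ℝ) ^ (1 - s) * ((m : ℝ) - k i₀)⁻¹)) ^ δ
        = C ^ δ * (m : ℝ) ^ (δ - s * δ) * ((m : ℝ) - k i₀) ^ (-δ) := by
      rw [Real.mul_rpow hC0.le (by positivity), Real.mul_rpow (by positivity) (by positivity),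
        ← Real.rpow_mul hm0.le, Real.inv_rpow hd.le, ← Real.rpow_neg hd.le, ← mul_assoc]
      congr 3; ring
    rw [e2]
    refine Finset.single_le_sum
      (f := fun i => C ^ δ * (m : ℝ) ^ (δ - s * δ) * ((m : ℝ) - k i) ^ (-δ))
      (fun i _ => ?_) (Finset.mem_univ i₀)
    have : 0 ≤ (m : ℝ) - k i := by linarith [hki i]
    positivity
  · intro m k x hx
    rw [Fintype.mem_piFinset]
    exact fun i => Finset.mem_range.2 (hlt m k x hx i)
  · intro m
    rw [Finset.sum_comm]
    have hone : ∀ i ∈ (Finset.univ : Finset (Fin n)),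
        ∑ k ∈ Fintype.piFinset (fun _ : Fin n => Finset.range m),
          C ^ δ * (m : ℝ) ^ (δ - s * δ) * ((m : ℝ) - k i) ^ (-δ)
        ≤ C ^ δ / (1 - δ) * (m : ℝ) ^ ((n : ℝ) - s * δ) := by
      intro i _
      rw [← Finset.mul_sum, sum_coord n i m (fun j => ((m : ℝ) - j) ^ (-δ))]
      have hrefl : ∑ j ∈ Finset.range m, ((m : ℝ) - j) ^ (-δ)
          = ∑ j ∈ Finset.range m, ((j : ℝ) + 1) ^ (-δ) := by
        rw [← Finset.sum_range_reflect]
        refine Finset.sum_congr rfl fun j hj => ?_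
        have hj' := Finset.mem_range.1 hj
        have : ((m - 1 - j : ℕ) : ℝ) = m - 1 - j := by
          rw [Nat.sub_sub, Nat.cast_sub (by omega)]; push_cast; ring
        rw [this]; congr 1; ring
      rw [hrefl]
      rcases Nat.eq_zero_or_pos m with rfl | hm
      · simp
        have : 0 ≤ 1 - δ := by linarith
        positivity
      have hm0 : (0 : ℝ) < m := by exact_mod_cast hm
      have hsum := sum_pow_neg δ h0 h1 m
      calc _ ≤ C ^ δ * (m : ℝ) ^ (δ - s * δ) * ((m : ℝ) ^ (n - 1) *
            ((m : ℝ) ^ (1 - δ) / (1 - δ))) := by gcongr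
        _ = C ^ δ / (1 - δ) * ((m : ℝ) ^ (δ - s * δ) * (m : ℝ) ^ (n - 1) * (m : ℝ) ^ (1 - δ)) := by
          ring
        _ = _ := by
          rw [← Real.rpow_natCast, ← Real.rpow_add hm0, ← Real.rpow_add hm0,
            Nat.cast_sub hn]
          congr 2; push_cast; ring
    refine (Finset.sum_le_sum hone).trans ?_
    simp [mul_assoc]

lemma case_two {n : ℕ} (a : Fin n → ℝ) (ha : ∀ i, 0 < a i) (hA : ∑ i, a i < 1) (s t : ℝ)
    (hs : 1 ≤ s) (hst : s < t) (δ : ℝ) (h0 : 0 < δ) (hδ : (n : ℝ) - s * δ < -1) :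
    ∃ M : ℕ, Measure.hausdorffMeasure δ
      {x : ℝ | {i : ℕ × (Fin n → ℕ) | x ∈ solE a s t M i.1 i.2}.Infinite} ≠ ⊤ := by
  obtain ⟨M, hM1, hM⟩ := ex_large (1 + ∑ i, a i) s ((1 - ∑ i, a i) / 2) (by linarith)
    (by linarith)
  obtain ⟨B, hB, hB'⟩ := ex_B a ha
  have hA0 : 0 ≤ ∑ i, a i := Finset.sum_nonneg fun i _ => (ha i).le
  have hA1 : 0 < 1 - ∑ i, a i := by linarith
  have ht : 0 < t := by linarith
  set C : ℝ := (4 * t / (1 - ∑ i, a i)) * (1 + ∑ i, a i) with hC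
  have hC0 : 0 < C := by positivity
  clear_value C
  refine ⟨M, key_haus n (solE a s t M)
    (fun m k => C ^ δ * (m : ℝ) ^ (- (s * δ)))
    (fun m => Finset.range (B * m + 1)) δ (n - s * δ) ((B + 1) ^ n * C ^ δ) h0 hδ ?_ ?_ ?_ ?_⟩
  · intro m k hk
    positivity
  · intro m k x y hx hy hxy
    obtain ⟨hx1, hx2, hx3, hx4, hx5⟩ := hx
    obtain ⟨hy1, hy2, hy3, hy4, hy5⟩ := hy
    have hm : 1 ≤ m := hM1.trans hx2
    have hm0 : (0 : ℝ) < m := by exact_mod_cast hm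
    have hsep := sep_two a ha (fun i => (k i : ℝ) / m)
      (fun i => div_pos (by exact_mod_cast hx3 i) hm0) x y _ t (by linarith [hx1.1]) hxy hy1.2
      hA (hM m hx2)
      (approx_rel a ha s x hx1.1 m hm k hx4) (approx_rel a ha s y hy1.1 m hm k hy4)
    rw [← mul_assoc, ← hC] at hsep
    refine (Real.rpow_le_rpow (by linarith) hsep h0.le).trans ?_
    rw [Real.mul_rpow hC0.le (by positivity), ← Real.rpow_mul hm0.le, neg_mul]
  · intro m k x hx
    rw [Fintype.mem_piFinset]
    intro i
    have := le_case_two a ha x (hs.trans hx.1.1) B hB hB' m k hx.2.2.1 hx.2.2.2.1 i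
    exact Finset.mem_range.2 (by omega)
  · intro m
    rw [Finset.sum_const, Fintype.card_piFinset]
    rcases Nat.eq_zero_or_pos m with rfl | hm
    · have : -(s * δ) ≠ 0 := by nlinarith
      simp [Real.zero_rpow this]
      positivity
    have hm0 : (0 : ℝ) < m := by exact_mod_cast hm
    have hm1 : (1 : ℝ) ≤ m := by exact_mod_cast hm
    simp only [Finset.card_range, Finset.prod_const, Finset.card_univ, Fintype.card_fin,
      nsmul_eq_mul]
    push_cast
    calc ((B : ℝ) * m + 1) ^ n * (C ^ δ * (m : ℝ) ^ (-(s * δ)))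
        ≤ (((B : ℝ) + 1) * m) ^ n * (C ^ δ * (m : ℝ) ^ (-(s * δ))) := by
          gcongr; linarith
      _ = ((B : ℝ) + 1) ^ n * C ^ δ * ((m : ℝ) ^ n * (m : ℝ) ^ (-(s * δ))) := by
          rw [mul_pow]; ring
      _ = _ := by
          rw [← Real.rpow_natCast (m : ℝ) n, ← Real.rpow_add hm0, ← sub_eq_add_neg]


/-- A solution `(y, x₁, …, xₙ) ∈ PS(α)^{n+1}` of `y = a₁x₁ + ⋯ + aₙxₙ` is non-trivial
unless `a₁ + ⋯ + aₙ = 1` and `y = x₁ = ⋯ = xₙ`. If all `aᵢ ≥ 1`, or `a₁ + ⋯ + aₙ < 1`,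
then for `n + 1 < s < t` the set of `α ∈ [s, t]` for which there are infinitely many
non-trivial solutions has Hausdorff dimension at most `(n + 1)/s`. -/
theorem statement2 (n : ℕ) (hn : 1 ≤ n) (a : Fin n → ℝ) (ha : ∀ i, 0 < a i)
    (hcond : (∀ i, 1 ≤ a i) ∨ ∑ i, a i < 1)
    (s t : ℝ) (hs : (n : ℝ) + 1 < s) (hst : s < t) :
    dimH {α ∈ Set.Icc s t |
      {sol : ℤ × (Fin n → ℤ) |
        sol.1 ∈ PS α ∧ (∀ i, sol.2 i ∈ PS α) ∧
        (sol.1 : ℝ) = ∑ i, a i * (sol.2 i : ℝ) ∧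
        ¬(∑ i, a i = 1 ∧ ∀ i, sol.2 i = sol.1)}.Infinite} ≤
      ENNReal.ofReal (((n : ℝ) + 1) / s) := by
  have hn0 : (1 : ℝ) ≤ n := by exact_mod_cast hn
  have hs0 : 0 < s := by linarith
  have hs1 : 1 ≤ s := by linarith
  by_contra hcon
  rw [not_le] at hcon
  obtain ⟨r, hr1, hr2⟩ := ENNReal.lt_iff_exists_nnreal_btwn.1 hcon
  have hc0 : 0 < ((n : ℝ) + 1) / s := by positivity
  have hc1 : ((n : ℝ) + 1) / s < 1 := by rw [div_lt_one hs0]; exact hs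
  have hr1' : ((n : ℝ) + 1) / s < r := by
    rwa [ENNReal.ofReal_lt_coe_iff (by positivity)] at hr1
  obtain ⟨δ, hδ1, hδ2⟩ := exists_between (lt_min hr1' hc1)
  have hδ0 : 0 < δ := hc0.trans hδ1
  have hδr : δ < r := hδ2.trans_le (min_le_left _ _)
  have hδlt : δ < 1 := hδ2.trans_le (min_le_right _ _)
  have hexp : (n : ℝ) - s * δ < -1 := by
    rw [div_lt_iff₀ hs0] at hδ1; linarith
  have hex : ∃ M : ℕ, Measure.hausdorffMeasure δ
      {x : ℝ | {i : ℕ × (Fin n → ℕ) | x ∈ solE a s t M i.1 i.2}.Infinite} ≠ ⊤ := by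
    rcases hcond with h | h
    · exact case_one hn a h s t hs1 δ hδ0 hδlt hexp
    · exact case_two a ha h s t hs1 hst δ hδ0 hexp
  obtain ⟨M, hM⟩ := hex
  lift δ to NNReal using hδ0.le
  have hle := dimH_mono (red_sub a ha s t hs1 M)
  have hle2 := dimH_le_of_hausdorffMeasure_ne_top (d := δ) hM
  have h3 := ENNReal.coe_lt_coe.1 (hr2.trans_le (hle.trans hle2))
  have h4 : (r : ℝ) < δ := by exact_mod_cast h3
  linarith
end

section
/- Let n ∈ ℕ and let a₁, …, aₙ be positive real numbers. Suppose that either aᵢ ≥ 1 for all 1 ≤ i ≤ n, or a₁ + ⋯ + aₙ < 1. Then for (Lebesgue) almost every α > n + 1, the equation y = a₁x₁ + ⋯ + aₙxₙ has at most finitely many non-trivial solutions (y, x₁, …, xₙ) ∈ PS(α)^{n+1}. -/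
open MeasureTheory

lemma aux_vol (S : Set ℝ) (D : ℝ) (h : ∀ x ∈ S, ∀ y ∈ S, x < y → y - x ≤ D) (hD : 0 ≤ D) :
    volume S ≤ ENNReal.ofReal D := by
  refine (Real.volume_le_diam S).trans (Metric.ediam_le ?_)
  intro x hx y hy
  rw [edist_dist]
  apply ENNReal.ofReal_le_ofReal
  rw [Real.dist_eq]
  rcases lt_trichotomy x y with h1 | h1 | h1
  · rw [abs_sub_comm, abs_of_pos (by linarith)]; exact h x hx y hy h1
  · subst h1; simpa using hD
  · rw [abs_of_pos (by linarith)]; exact h y hy x hx h1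

lemma aux_dec (r α β : ℝ) (hr : 0 ≤ r) (hα : 0 < α) (h : α < β) :
    r ^ β * (1 + (β - α) * (1 - r)) ≤ r ^ α := by
  have e : r ^ β = r ^ α * r ^ (β - α) := by
    rw [← Real.rpow_add_of_nonneg hr hα.le (by linarith)]; congr 1; ring
  have h1 : r ^ (β - α) ≤ Real.exp (-((β - α) * (1 - r))) := by
    have : r ≤ Real.exp (r - 1) := by have := Real.add_one_le_exp (r - 1); linarith
    calc r ^ (β - α) ≤ (Real.exp (r - 1)) ^ (β - α) := Real.rpow_le_rpow hr this (by linarith)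
      _ = _ := by rw [← Real.exp_mul]; congr 1; ring
  have h2 : 1 + (β - α) * (1 - r) ≤ Real.exp ((β - α) * (1 - r)) := by
    have := Real.add_one_le_exp ((β - α) * (1 - r)); linarith
  have h0 : 0 ≤ r ^ (β - α) := Real.rpow_nonneg hr _
  have h3 : r ^ (β - α) * (1 + (β - α) * (1 - r)) ≤ 1 := by
    calc _ ≤ r ^ (β - α) * Real.exp ((β - α) * (1 - r)) := by gcongr
      _ ≤ Real.exp (-((β - α) * (1 - r))) * Real.exp ((β - α) * (1 - r)) := by gcongr
      _ = 1 := by rw [← Real.exp_add]; simp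
  rw [e, mul_assoc]
  exact mul_le_of_le_one_right (Real.rpow_nonneg hr _) h3

lemma aux_conv (r α β : ℝ) (hr : 0 ≤ r) (hα : 0 < α) (h : α < β) :
    β * r ^ α ≤ α * r ^ β + (β - α) := by
  have hb := one_add_mul_self_le_rpow_one_add (s := r ^ α - 1) (by
    have := Real.rpow_nonneg hr α; linarith) (p := β / α) (by rw [le_div_iff₀ hα]; linarith)
  rw [add_sub_cancel, ← Real.rpow_mul hr, mul_div_cancel₀ _ hα.ne'] at hb
  have := mul_le_mul_of_nonneg_left hb hα.le
  have e : α * (1 + β / α * (r ^ α - 1)) = α + β * (r ^ α - 1) := by field_simp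
  rw [e] at this
  linarith

lemma aux_sol (n : ℕ) (a : Fin n → ℝ) (ha : ∀ i, 0 < a i) (c α : ℝ) (hc : c ≤ α)
    (m : ℕ) (hm : 1 ≤ m) (k : Fin n → ℕ)
    (h : ((⌊(m : ℝ) ^ α⌋ : ℤ) : ℝ) = ∑ i, a i * ((⌊(k i : ℝ) ^ α⌋ : ℤ) : ℝ)) :
    |∑ i, a i * ((k i : ℝ) / m) ^ α - 1| ≤ (1 + ∑ i, a i) * (m : ℝ) ^ (-c) := by
  have hm0 : (0 : ℝ) < m := by exact_mod_cast hm
  have hP : 0 < (m : ℝ) ^ α := Real.rpow_pos_of_pos hm0 _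
  have e : ∑ i, a i * ((k i : ℝ) / m) ^ α - 1
      = (∑ i, a i * (k i : ℝ) ^ α - (m : ℝ) ^ α) * (m : ℝ) ^ (-α) := by
    rw [Real.rpow_neg hm0.le, sub_mul, mul_inv_cancel₀ hP.ne', Finset.sum_mul]
    congr 1
    refine Finset.sum_congr rfl fun i _ => ?_
    rw [Real.div_rpow (by positivity) hm0.le]; ring
  have h1 : ∑ i, a i * ((⌊(k i : ℝ) ^ α⌋ : ℤ) : ℝ) ≤ ∑ i, a i * (k i : ℝ) ^ α :=
    Finset.sum_le_sum fun i _ => mul_le_mul_of_nonneg_left (Int.floor_le _) (ha i).le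
  have h2 : ∑ i, a i * (k i : ℝ) ^ α ≤ ∑ i, a i * ((⌊(k i : ℝ) ^ α⌋ : ℤ) : ℝ) + ∑ i, a i := by
    rw [← Finset.sum_add_distrib]
    refine Finset.sum_le_sum fun i _ => ?_
    have := mul_le_mul_of_nonneg_left (Int.lt_floor_add_one ((k i : ℝ) ^ α)).le (ha i).le
    linarith
  have h3 := Int.floor_le ((m : ℝ) ^ α)
  have h4 := Int.lt_floor_add_one ((m : ℝ) ^ α)
  have h5 : 0 ≤ ∑ i, a i := Finset.sum_nonneg fun i _ => (ha i).le
  have h6 : |∑ i, a i * (k i : ℝ) ^ α - (m : ℝ) ^ α| ≤ 1 + ∑ i, a i := by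
    rw [abs_le]; constructor <;> linarith
  rw [e, abs_mul, abs_of_pos (Real.rpow_pos_of_pos hm0 (-α))]
  have h7 : (m : ℝ) ^ (-α) ≤ (m : ℝ) ^ (-c) :=
    Real.rpow_le_rpow_of_exponent_le (by exact_mod_cast hm) (by linarith)
  have := (Real.rpow_pos_of_pos hm0 (-α)).le
  gcongr

/-- the exceptional set for a given tuple -/
def EE (n : ℕ) (a : Fin n → ℝ) (c d : ℝ) (m : ℕ) (k : Fin n → ℕ) : Set ℝ :=
  {α | α ∈ Set.Icc c d ∧ |∑ i, a i * ((k i : ℝ) / m) ^ α - 1| ≤ (1 + ∑ i, a i) * (m : ℝ) ^ (-c)}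

/-- the solution set -/
def SS (n : ℕ) (a : Fin n → ℝ) (α : ℝ) : Set (ℤ × (Fin n → ℤ)) :=
  {sol : ℤ × (Fin n → ℤ) |
        sol.1 ∈ PS α ∧ (∀ i, sol.2 i ∈ PS α) ∧
        (sol.1 : ℝ) = ∑ i, a i * (sol.2 i : ℝ) ∧
        ¬(∑ i, a i = 1 ∧ ∀ i, sol.2 i = sol.1)}

lemma aux_floor (k : ℕ) (hk : 1 ≤ k) (α : ℝ) (hα : 0 ≤ α) : 1 ≤ ⌊(k : ℝ) ^ α⌋ := by
  rw [Int.le_floor]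
  push_cast
  exact Real.one_le_rpow (by exact_mod_cast hk) hα

lemma aux_fin (n : ℕ) (a : Fin n → ℝ) (ha : ∀ i, 0 < a i) (α : ℝ) (hα : 0 ≤ α)
    (h : (SS n a α).Infinite) :
    ∃ᶠ m : ℕ in Filter.atTop, ∃ k : Fin n → ℕ, 1 ≤ m ∧ (∀ i, 1 ≤ k i) ∧
      (⌊(m : ℝ) ^ α⌋, fun i => ⌊(k i : ℝ) ^ α⌋) ∈ SS n a α := by
  by_contra hcon
  rw [Filter.not_frequently, Filter.eventually_atTop] at hcon
  obtain ⟨N, hN⟩ := hcon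
  apply h
  let B : ℤ := ⌊(N : ℝ) ^ α⌋
  have hfin : ((Set.Icc (0 : ℤ) B) ×ˢ
      (Set.univ.pi fun i : Fin n => Set.Icc (0 : ℤ) ⌈(B : ℝ) / a i⌉)).Finite :=
    (Set.finite_Icc _ _).prod (Set.Finite.pi fun i => Set.finite_Icc _ _)
  refine hfin.subset ?_
  rintro ⟨y, x⟩ hs
  have hs' := hs
  obtain ⟨⟨m, hm, hy⟩, hx, heq, hnt⟩ := hs'
  choose k hk hx using hx
  simp only at hy hx heq
  have hx' : x = fun i => ⌊(k i : ℝ) ^ α⌋ := funext hx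
  have hmN : m < N := by
    by_contra hmN
    refine hN m (not_lt.mp hmN) ⟨k, hm, hk, ?_⟩
    rw [← hx', ← hy]; exact hs
  have hyB : y ≤ B := by
    rw [hy]
    apply Int.floor_le_floor
    exact Real.rpow_le_rpow (by positivity) (by exact_mod_cast hmN.le) hα
  have hy1 : 1 ≤ y := by rw [hy]; exact aux_floor m hm α hα
  have hx1 : ∀ i, 1 ≤ x i := fun i => by rw [hx i]; exact aux_floor _ (hk i) α hα
  simp only [Set.mem_prod, Set.mem_Icc, Set.mem_pi, Set.mem_univ, forall_true_left]
  refine ⟨⟨by omega, hyB⟩, fun i => ⟨by linarith [hx1 i], ?_⟩⟩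
  have : a i * (x i : ℝ) ≤ y := by
    rw [heq]
    refine Finset.single_le_sum (f := fun i => a i * (x i : ℝ)) (fun j _ => ?_) (Finset.mem_univ i)
    have : (1 : ℝ) ≤ x j := by exact_mod_cast hx1 j
    have := ha j
    positivity
  have h2 : (x i : ℝ) ≤ (B : ℝ) / a i := by
    rw [le_div_iff₀ (ha i)]
    have : (y : ℝ) ≤ B := by exact_mod_cast hyB
    linarith
  have h3 : (x i : ℝ) ≤ (⌈(B : ℝ) / a i⌉ : ℤ) := h2.trans (Int.le_ceil _)
  exact_mod_cast h3

lemma aux_BC (n : ℕ) (a : Fin n → ℝ) (ha : ∀ i, 0 < a i) (c d : ℝ) (hc : 0 ≤ c)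
    (T : ℕ → Finset (Fin n → ℕ))
    (hT : ∀ α ∈ Set.Icc c d, ∀ m : ℕ, 1 ≤ m → ∀ k : Fin n → ℕ, (∀ i, 1 ≤ k i) →
      (⌊(m : ℝ) ^ α⌋, fun i => ⌊(k i : ℝ) ^ α⌋) ∈ SS n a α → k ∈ T m)
    (C p : ℝ) (hp : 1 < p)
    (hvol : ∀ᶠ m : ℕ in Filter.atTop, ∑ k ∈ T m, volume (EE n a c d m k)
      ≤ ENNReal.ofReal (C * (m : ℝ) ^ (-p))) :
    volume {α | α ∈ Set.Icc c d ∧ (SS n a α).Infinite} = 0 := by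
  obtain ⟨N, hN⟩ := Filter.eventually_atTop.mp hvol
  have key : volume {α | ∃ᶠ m : ℕ in Filter.atTop, N ≤ m ∧ α ∈ ⋃ k ∈ T m, EE n a c d m k} = 0 := by
    apply measure_setOfPred_frequently_eq_zero
    have hs : Summable fun m : ℕ => C * (m : ℝ) ^ (-p) :=
      (Real.summable_nat_rpow.mpr (by linarith)).mul_left C
    refine ne_top_of_le_ne_top hs.tsum_ofReal_ne_top (ENNReal.tsum_le_tsum fun m => ?_)
    by_cases hm : N ≤ m
    · refine le_trans (measure_mono ?_) ((measure_biUnion_finset_le (T m) (EE n a c d m)).trans (hN m hm))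
      intro x hx; exact hx.2
    · simp [hm]
  refine measure_mono_null ?_ key
  rintro α ⟨hα, hinf⟩
  have h1 := aux_fin n a ha α (hc.trans hα.1) hinf
  refine (h1.and_eventually (Filter.eventually_ge_atTop N)).mono ?_
  rintro m ⟨⟨k, hm, hk, hs⟩, hNm⟩
  refine ⟨hNm, ?_⟩
  simp only [Set.mem_iUnion]
  exact ⟨k, hT α hα m hm k hk hs, hα, aux_sol n a ha c α hα.1 m hm k hs.2.2.1⟩

lemma aux_small (A c ε : ℝ) (hc : 0 < c) (hε : 0 < ε) :
    ∀ᶠ m : ℕ in Filter.atTop, A * (m : ℝ) ^ (-c) ≤ ε := by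
  have h := ((tendsto_rpow_neg_atTop hc).comp tendsto_natCast_atTop_atTop).const_mul A
  rw [mul_zero] at h
  exact (h.eventually (ge_mem_nhds hε))

lemma aux_lt (k m : ℕ) (α : ℝ) (hα : 0 ≤ α) (h : ⌊(k : ℝ) ^ α⌋ < ⌊(m : ℝ) ^ α⌋) : k < m := by
  by_contra hcon
  refine absurd h (not_lt.mpr (Int.floor_le_floor ?_))
  exact Real.rpow_le_rpow (by positivity) (by exact_mod_cast not_lt.mp hcon) hα

lemma case1 (n : ℕ) (hn : 1 ≤ n) (a : Fin n → ℝ) (ha : ∀ i, 1 ≤ a i) (c d : ℝ)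
    (hc : (n : ℝ) + 1 < c) :
    volume {α | α ∈ Set.Icc c d ∧ (SS n a α).Infinite} = 0 := by
  have ha0 : ∀ i, 0 < a i := fun i => by linarith [ha i]
  have hn0 : (0 : ℝ) ≤ n := by positivity
  set δ : ℝ := (c - n - 1) / 2 with hδ
  have hδ0 : 0 < δ := by rw [hδ]; linarith
  set A : ℝ := 1 + ∑ i, a i with hA
  have hA0 : 0 < A := by
    have : 0 ≤ ∑ i, a i := Finset.sum_nonneg fun i _ => (ha0 i).le
    linarith
  refine aux_BC n a ha0 c d (by linarith) (fun m => Fintype.piFinset fun _ => Finset.range m) ?_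
    (4 * A * n * (1 + 1 / δ)) (1 + δ) (by linarith) ?_
  · intro α hα m hm k hk hs
    have hα0 : 0 ≤ α := by linarith [hα.1]
    rw [Fintype.mem_piFinset]
    intro i
    rw [Finset.mem_range]
    apply aux_lt _ _ α hα0
    have heq := hs.2.2.1
    have hnt := hs.2.2.2
    simp only at heq hnt
    have hx1 : ∀ i, (1 : ℝ) ≤ ((⌊(k i : ℝ) ^ α⌋ : ℤ) : ℝ) := fun i => by
      exact_mod_cast aux_floor _ (hk i) α hα0
    by_contra hcon
    have hle : ((⌊(m : ℝ) ^ α⌋ : ℤ) : ℝ) ≤ ((⌊(k i : ℝ) ^ α⌋ : ℤ) : ℝ) := by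
      exact_mod_cast not_lt.mp hcon
    rw [← Finset.add_sum_erase _ _ (Finset.mem_univ i)] at heq
    have hpos : ∀ j, 0 < a j * ((⌊(k j : ℝ) ^ α⌋ : ℤ) : ℝ) := fun j =>
      mul_pos (ha0 j) (by linarith [hx1 j])
    have hrest : 0 ≤ ∑ j ∈ Finset.univ.erase i, a j * ((⌊(k j : ℝ) ^ α⌋ : ℤ) : ℝ) :=
      Finset.sum_nonneg fun j _ => (hpos j).le
    have hai : 0 ≤ (a i - 1) * ((⌊(k i : ℝ) ^ α⌋ : ℤ) : ℝ) :=
      mul_nonneg (by linarith [ha i]) (by linarith [hx1 i])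
    have hempty : ∀ j, j = i := by
      intro j
      by_contra hj
      have := Finset.single_le_sum (f := fun j => a j * ((⌊(k j : ℝ) ^ α⌋ : ℤ) : ℝ))
        (fun j _ => (hpos j).le) (Finset.mem_erase.mpr ⟨hj, Finset.mem_univ j⟩)
      linarith [hpos j]
    have hz : (a i - 1) * ((⌊(k i : ℝ) ^ α⌋ : ℤ) : ℝ) = 0 := by linarith
    have ha1 : a i = 1 := by
      rcases mul_eq_zero.mp hz with h | h
      · linarith
      · linarith [hx1 i]
    apply hnt
    constructor
    · rw [← Finset.add_sum_erase _ _ (Finset.mem_univ i), ha1]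
      have : Finset.univ.erase i = ∅ := by
        ext j; simp [hempty j]
      rw [this]; simp
    · intro j
      rw [hempty j]
      have : ((⌊(k i : ℝ) ^ α⌋ : ℤ) : ℝ) = ((⌊(m : ℝ) ^ α⌋ : ℤ) : ℝ) := by linarith
      exact_mod_cast this
  · filter_upwards [aux_small A c (1 / 2) (by linarith) (by norm_num),
      Filter.eventually_ge_atTop 1] with m hε hm
    have hm0 : (0 : ℝ) < m := by exact_mod_cast hm
    have hm1 : (1 : ℝ) ≤ m := by exact_mod_cast hm
    set ε : ℝ := A * (m : ℝ) ^ (-c) with hεd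
    have hε0 : 0 < ε := mul_pos hA0 (Real.rpow_pos_of_pos hm0 _)
    have hbound : ∀ k ∈ Fintype.piFinset (fun _ : Fin n => Finset.range m),
        volume (EE n a c d m k) ≤ ENNReal.ofReal (∑ i, 4 * ε * m * ((m : ℝ) - k i)⁻¹) := by
      intro k hk
      rw [Fintype.mem_piFinset] at hk
      have hk' : ∀ i, (k i : ℝ) < m := fun i => by exact_mod_cast Finset.mem_range.mp (hk i)
      have hterm : ∀ i, 0 ≤ 4 * ε * m * ((m : ℝ) - k i)⁻¹ := fun i => by
        have := hk' i
        have : 0 < ((m : ℝ) - k i)⁻¹ := inv_pos.mpr (by linarith)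
        positivity
      have : Nonempty (Fin n) := ⟨⟨0, hn⟩⟩
      obtain ⟨i0, hi0⟩ := Finite.exists_max k
      apply aux_vol _ _ _ (Finset.sum_nonneg fun i _ => hterm i)
      rintro α ⟨hα, hα2⟩ β ⟨hβ, hβ2⟩ hαβ
      refine le_trans ?_ (Finset.single_le_sum (fun i _ => hterm i) (Finset.mem_univ i0))
      rw [← hA, ← hεd, abs_le] at hα2 hβ2
      set t : ℝ := (β - α) * (1 - (k i0 : ℝ) / m) with ht
      have hq : 1 - (k i0 : ℝ) / m = ((m : ℝ) - k i0) / m := by field_simp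
      have hi0' := hk' i0
      have ht0 : 0 ≤ t := by
        rw [ht, hq]
        exact mul_nonneg (by linarith) (div_nonneg (by linarith) hm0.le)
      have hsum : (∑ i, a i * ((k i : ℝ) / m) ^ β) * (1 + t) ≤ ∑ i, a i * ((k i : ℝ) / m) ^ α := by
        rw [Finset.sum_mul]
        refine Finset.sum_le_sum fun i _ => ?_
        have h1 := aux_dec ((k i : ℝ) / m) α β (by positivity) (by linarith [hα.1]) hαβ
        have h2 : t ≤ (β - α) * (1 - (k i : ℝ) / m) := by
          rw [ht]
          have : (k i : ℝ) ≤ k i0 := by exact_mod_cast hi0 i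
          have : (k i : ℝ) / m ≤ (k i0 : ℝ) / m := by gcongr
          apply mul_le_mul_of_nonneg_left _ (by linarith)
          linarith
        have h3 : 0 ≤ ((k i : ℝ) / m) ^ β := by positivity
        rw [mul_assoc]
        apply mul_le_mul_of_nonneg_left _ (ha0 i).le
        refine le_trans (mul_le_mul_of_nonneg_left ?_ h3) h1
        linarith
      have h4 : t ≤ 4 * ε := by
        have := mul_le_mul_of_nonneg_right (show 1 / 2 ≤ ∑ i, a i * ((k i : ℝ) / m) ^ β by linarith) ht0
        nlinarith
      rw [ht, hq, ← mul_div_assoc, div_le_iff₀ hm0] at h4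
      rw [← div_eq_mul_inv, le_div_iff₀ (by linarith)]
      exact h4
    refine (Finset.sum_le_sum hbound).trans ?_
    rw [← ENNReal.ofReal_sum_of_nonneg]
    swap
    · intro k hk
      rw [Fintype.mem_piFinset] at hk
      refine Finset.sum_nonneg fun i _ => ?_
      have : (k i : ℝ) < m := by exact_mod_cast Finset.mem_range.mp (hk i)
      have : 0 < ((m : ℝ) - k i)⁻¹ := inv_pos.mpr (by linarith)
      positivity
    apply ENNReal.ofReal_le_ofReal
    rw [Finset.sum_comm]
    have hharm : ∑ b ∈ Finset.range m, ((m : ℝ) - b)⁻¹ ≤ 1 + Real.log m := by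
      refine le_trans (le_of_eq ?_) (harmonic_le_one_add_log m)
      rw [harmonic, ← Finset.sum_range_reflect]
      push_cast
      refine Finset.sum_congr rfl fun j hj => ?_
      have hj := Finset.mem_range.mp hj
      have : ((m - 1 - j : ℕ) : ℝ) = (m : ℝ) - 1 - j := by
        rw [Nat.cast_sub (by omega), Nat.cast_sub hm]; simp
      rw [this]; congr 1; ring
    have hlog : 1 + Real.log m ≤ (1 + 1 / δ) * (m : ℝ) ^ δ := by
      have h1 := Real.log_le_rpow_div hm0.le hδ0
      have h2 := Real.one_le_rpow hm1 hδ0.le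
      calc 1 + Real.log m ≤ (m : ℝ) ^ δ + (m : ℝ) ^ δ / δ := add_le_add h2 h1
        _ = _ := by ring
    have hin : ∀ i : Fin n, ∑ k ∈ Fintype.piFinset (fun _ : Fin n => Finset.range m),
        4 * ε * m * ((m : ℝ) - k i)⁻¹ ≤ 4 * A * (1 + 1 / δ) * (m : ℝ) ^ (-(1 + δ)) := by
      intro i
      rw [Fintype.sum_piFinset_apply (fun b : ℕ => 4 * ε * m * ((m : ℝ) - b)⁻¹), ← Finset.mul_sum]
      simp only [Finset.card_range, Fintype.card_fin, nsmul_eq_mul]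
      push_cast
      have e2 : (m : ℝ) ^ (n - 1) * m = (m : ℝ) ^ (n : ℝ) := by
        rw [Real.rpow_natCast, ← pow_succ]; congr 1; omega
      calc (m : ℝ) ^ (n - 1) * (4 * ε * m * ∑ b ∈ Finset.range m, ((m : ℝ) - b)⁻¹)
          ≤ (m : ℝ) ^ (n - 1) * (4 * ε * m * ((1 + 1 / δ) * (m : ℝ) ^ δ)) := by
            gcongr; exact hharm.trans hlog
        _ = 4 * A * (1 + 1 / δ) * (((m : ℝ) ^ (n - 1) * m) * (m : ℝ) ^ (-c) * (m : ℝ) ^ δ) := by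
            rw [hεd]; ring
        _ = _ := by
            rw [e2, ← Real.rpow_add hm0, ← Real.rpow_add hm0]
            congr 2; rw [hδ]; ring
    refine (Finset.sum_le_sum fun i _ => hin i).trans (le_of_eq ?_)
    simp only [Finset.sum_const, Finset.card_univ, Fintype.card_fin, nsmul_eq_mul]
    ring

lemma case2 (n : ℕ) (hn : 1 ≤ n) (a : Fin n → ℝ) (ha0 : ∀ i, 0 < a i) (ha : ∑ i, a i < 1) (c d : ℝ)
    (hc : (n : ℝ) + 1 < c) :
    volume {α | α ∈ Set.Icc c d ∧ (SS n a α).Infinite} = 0 := by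
  have hn0 : (0 : ℝ) ≤ n := by positivity
  have : Nonempty (Fin n) := ⟨⟨0, hn⟩⟩
  have hs0 : 0 ≤ ∑ i, a i := Finset.sum_nonneg fun i _ => (ha0 i).le
  set s : ℝ := ∑ i, a i with hs
  set A : ℝ := 1 + s with hA
  have hA0 : 0 < A := by linarith
  obtain ⟨M, hM⟩ : ∃ M : ℕ, ∀ i, 2 / a i ≤ M := by
    obtain ⟨i0, hi0⟩ := Finite.exists_max fun i => 2 / a i
    obtain ⟨M, hM⟩ := exists_nat_ge (2 / a i0)
    exact ⟨M, fun i => (hi0 i).trans hM⟩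
  have hM1 : (1 : ℝ) ≤ M := by
    obtain ⟨i⟩ := this
    have h1 : a i ≤ s := Finset.single_le_sum (fun j _ => (ha0 j).le) (Finset.mem_univ i)
    refine le_trans ?_ (hM i)
    rw [le_div_iff₀ (ha0 i)]; linarith
  by_cases hd : d ≤ 0
  · rw [Set.Icc_eq_empty (by linarith)]; simp
  push Not at hd
  refine aux_BC n a ha0 c d (by linarith)
    (fun m => Fintype.piFinset fun _ => Finset.range (M * m + 1)) ?_
    ((M + 1) ^ n * (4 * A * d / (1 - s))) (c - n) (by linarith) ?_
  · intro α hα m hm k hk hsol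
    have hα1 : 1 ≤ α := by linarith [hα.1]
    have hm0 : (0 : ℝ) < m := by exact_mod_cast hm
    have heq := hsol.2.2.1
    simp only at heq
    have hx1 : ∀ i, (1 : ℝ) ≤ ((⌊(k i : ℝ) ^ α⌋ : ℤ) : ℝ) := fun i => by
      exact_mod_cast aux_floor _ (hk i) α (by linarith)
    rw [Fintype.mem_piFinset]
    intro i
    rw [Finset.mem_range, Nat.lt_succ_iff]
    by_contra hcon
    have hcon' : (M : ℝ) * m < k i := by exact_mod_cast not_le.mp hcon
    have h1 : a i * ((⌊(k i : ℝ) ^ α⌋ : ℤ) : ℝ) ≤ (m : ℝ) ^ α := by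
      refine le_trans ?_ (Int.floor_le ((m : ℝ) ^ α))
      rw [heq]
      exact Finset.single_le_sum (f := fun i => a i * ((⌊(k i : ℝ) ^ α⌋ : ℤ) : ℝ))
        (fun j _ => mul_nonneg (ha0 j).le (by linarith [hx1 j])) (Finset.mem_univ i)
    have h2 : (k i : ℝ) ^ α ≤ 2 * ((⌊(k i : ℝ) ^ α⌋ : ℤ) : ℝ) := by
      linarith [hx1 i, Int.lt_floor_add_one ((k i : ℝ) ^ α)]
    have h3 : ((M : ℝ) * m) ^ α < (k i : ℝ) ^ α :=
      Real.rpow_lt_rpow (by positivity) hcon' (by linarith)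
    rw [Real.mul_rpow (by positivity) hm0.le] at h3
    have h4 : (M : ℝ) ≤ (M : ℝ) ^ α := by
      simpa using Real.rpow_le_rpow_of_exponent_le hM1 hα1
    have h5 : 2 ≤ a i * M := by
      have := hM i
      rw [div_le_iff₀ (ha0 i)] at this; linarith
    have hP : 0 < (m : ℝ) ^ α := Real.rpow_pos_of_pos hm0 _
    have h6 : 2 * (m : ℝ) ^ α ≤ a i * ((M : ℝ) ^ α * (m : ℝ) ^ α) := by
      rw [← mul_assoc]
      apply mul_le_mul_of_nonneg_right _ hP.le
      exact h5.trans (mul_le_mul_of_nonneg_left h4 (ha0 i).le)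
    have h7 := mul_lt_mul_of_pos_left h3 (ha0 i)
    have h8 := mul_le_mul_of_nonneg_left h2 (ha0 i).le
    linarith
  · filter_upwards [aux_small A c ((1 - s) / 2) (by linarith) (by linarith),
      Filter.eventually_ge_atTop 1] with m hε hm
    have hm0 : (0 : ℝ) < m := by exact_mod_cast hm
    have hm1 : (1 : ℝ) ≤ m := by exact_mod_cast hm
    set ε : ℝ := A * (m : ℝ) ^ (-c) with hεd
    have hε0 : 0 < ε := mul_pos hA0 (Real.rpow_pos_of_pos hm0 _)
    have hs1 : 0 < 1 - s := by linarith
    have hbound : ∀ k ∈ Fintype.piFinset (fun _ : Fin n => Finset.range (M * m + 1)),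
        volume (EE n a c d m k) ≤ ENNReal.ofReal (4 * ε * d / (1 - s)) := by
      intro k hk
      apply aux_vol _ _ _ (by positivity)
      rintro α ⟨hα, hα2⟩ β ⟨hβ, hβ2⟩ hαβ
      rw [← hs, ← hA, ← hεd, abs_le] at hα2 hβ2
      have hα0 : 0 < α := by linarith [hα.1]
      have hsum : β * (∑ i, a i * ((k i : ℝ) / m) ^ α) ≤
          α * (∑ i, a i * ((k i : ℝ) / m) ^ β) + (β - α) * s := by
        rw [hs, Finset.mul_sum, Finset.mul_sum, Finset.mul_sum, ← Finset.sum_add_distrib]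
        refine Finset.sum_le_sum fun i _ => ?_
        have h1 := mul_le_mul_of_nonneg_left
          (aux_conv ((k i : ℝ) / m) α β (by positivity) hα0 hαβ) (ha0 i).le
        linarith
      rw [le_div_iff₀ hs1]
      set H1 := ∑ i, a i * ((k i : ℝ) / m) ^ α
      set H2 := ∑ i, a i * ((k i : ℝ) / m) ^ β
      have h3 : (β - α) * (H1 - s) ≤ α * (H2 - H1) := by nlinarith
      have h4 : α * (H2 - H1) ≤ d * (2 * ε) := by
        calc α * (H2 - H1) ≤ α * (2 * ε) := mul_le_mul_of_nonneg_left (by linarith) hα0.le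
          _ ≤ _ := mul_le_mul_of_nonneg_right hα.2 (by linarith)
      have h5 : (β - α) * ((1 - s) / 2) ≤ (β - α) * (H1 - s) :=
        mul_le_mul_of_nonneg_left (by linarith) (by linarith)
      linarith
    refine (Finset.sum_le_sum hbound).trans ?_
    rw [← ENNReal.ofReal_sum_of_nonneg (fun _ _ => by positivity)]
    apply ENNReal.ofReal_le_ofReal
    rw [Finset.sum_const, Fintype.card_piFinset_const, Finset.card_range, nsmul_eq_mul]
    push_cast
    calc ((M : ℝ) * m + 1) ^ n * (4 * ε * d / (1 - s))
        ≤ (((M : ℝ) + 1) * m) ^ n * (4 * ε * d / (1 - s)) := by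
          apply mul_le_mul_of_nonneg_right _ (by positivity)
          apply pow_le_pow_left₀ (by positivity)
          linarith
      _ = ((M : ℝ) + 1) ^ n * (4 * A * d / (1 - s)) * ((m : ℝ) ^ (n : ℝ) * (m : ℝ) ^ (-c)) := by
          rw [mul_pow, hεd, Real.rpow_natCast]; ring
      _ = _ := by
          rw [← Real.rpow_add hm0]; congr 2; ring

/-- If all `aᵢ ≥ 1`, or `a₁ + ⋯ + aₙ < 1`, then for almost every `α > n + 1`,
the equation `y = a₁x₁ + ⋯ + aₙxₙ` has at most finitely many non-trivial solutions
`(y, x₁, …, xₙ) ∈ PS(α)^{n+1}` (a solution is trivial iff `a₁ + ⋯ + aₙ = 1` and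
`y = x₁ = ⋯ = xₙ`). -/
theorem statement3 (n : ℕ) (hn : 1 ≤ n) (a : Fin n → ℝ) (ha : ∀ i, 0 < a i)
    (hcond : (∀ i, 1 ≤ a i) ∨ ∑ i, a i < 1) :
    volume {α : ℝ | (n : ℝ) + 1 < α ∧
      {sol : ℤ × (Fin n → ℤ) |
        sol.1 ∈ PS α ∧ (∀ i, sol.2 i ∈ PS α) ∧
        (sol.1 : ℝ) = ∑ i, a i * (sol.2 i : ℝ) ∧
        ¬(∑ i, a i = 1 ∧ ∀ i, sol.2 i = sol.1)}.Infinite} = 0 := by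
  have key : ∀ c d : ℝ, (n : ℝ) + 1 < c →
      volume {α | α ∈ Set.Icc c d ∧ (SS n a α).Infinite} = 0 := by
    intro c d hc
    rcases hcond with h | h
    · exact case1 n hn a h c d hc
    · exact case2 n hn a ha h c d hc
  have h2 : volume (⋃ j : ℕ, {α | α ∈ Set.Icc ((n : ℝ) + 1 + 1 / ((j : ℝ) + 1)) j ∧
      (SS n a α).Infinite}) = 0 := by
    rw [measure_iUnion_null_iff]
    intro j
    apply key
    have : 0 < 1 / ((j : ℝ) + 1) := by positivity
    linarith
  refine measure_mono_null ?_ h2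
  rintro α ⟨h1, hinf⟩
  rw [Set.mem_iUnion]
  obtain ⟨j1, hj1⟩ := exists_nat_one_div_lt (show 0 < α - (n + 1) by linarith)
  obtain ⟨j2, hj2⟩ := exists_nat_ge α
  refine ⟨max j1 j2, ⟨?_, ?_⟩, hinf⟩
  · have : 1 / (((max j1 j2 : ℕ) : ℝ) + 1) ≤ 1 / ((j1 : ℝ) + 1) := by
      apply one_div_le_one_div_of_le (by positivity)
      have : (j1 : ℝ) ≤ ((max j1 j2 : ℕ) : ℝ) := by exact_mod_cast le_max_left _ _
      linarith
    linarith
  · exact hj2.trans (by exact_mod_cast le_max_right _ _)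
end

section
/- Let n ∈ ℕ and let a₁, …, aₙ be positive real numbers. Then for all real s, t with 3n + 4 < s < t, the Hausdorff dimension of the set {α ∈ [s, t] : the equation y = a₁x₁ + ⋯ + aₙxₙ has infinitely many non-trivial solutions (y, x₁, …, xₙ) ∈ PS(α)^{n+1}} is at most 3n/(s − 4). -/
open MeasureTheory

def SolSet (n : ℕ) (a : Fin n → ℝ) (s t : ℝ) (m : ℕ) (k : Fin n → ℕ) : Set ℝ :=
  {α | α ∈ Set.Icc s t ∧ 1 ≤ m ∧ (∀ i, 1 ≤ k i) ∧
    ((⌊(m : ℝ) ^ α⌋ : ℤ) : ℝ) = ∑ i, a i * ((⌊(k i : ℝ) ^ α⌋ : ℤ) : ℝ) ∧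
    ¬(∑ i, a i = 1 ∧ ∀ i, ⌊(k i : ℝ) ^ α⌋ = ⌊(m : ℝ) ^ α⌋)}

/-- closeness of the normalized equation -/
lemma SolSet_close {n : ℕ} {a : Fin n → ℝ} (ha : ∀ i, 0 < a i) {s t : ℝ} {m : ℕ} {k : Fin n → ℕ}
    {α : ℝ} (h : α ∈ SolSet n a s t m k) :
    |∑ i, a i * ((k i : ℝ) / m) ^ α - 1| ≤ (1 + ∑ i, a i) * (m : ℝ) ^ (-s) := by
  obtain ⟨⟨h1, h2⟩, hm, hk, he, -⟩ := h
  have hm0 : (0 : ℝ) < m := by exact_mod_cast hm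
  have hm1 : (1 : ℝ) ≤ m := by exact_mod_cast hm
  have key : |∑ i, a i * (k i : ℝ) ^ α - (m : ℝ) ^ α| ≤ 1 + ∑ i, a i := by
    have e1 : ∑ i, a i * (k i : ℝ) ^ α - (m : ℝ) ^ α
        = ∑ i, a i * Int.fract ((k i : ℝ) ^ α) - Int.fract ((m : ℝ) ^ α) := by
      simp only [Int.fract, mul_sub, Finset.sum_sub_distrib]
      rw [he]; ring
    rw [e1]
    have b1 : ∑ i, a i * Int.fract ((k i : ℝ) ^ α) ≤ ∑ i, a i :=
      Finset.sum_le_sum fun i _ => by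
        have := (Int.fract_lt_one ((k i : ℝ) ^ α)).le
        nlinarith [ha i]
    have b0 : 0 ≤ ∑ i, a i * Int.fract ((k i : ℝ) ^ α) :=
      Finset.sum_nonneg fun i _ => mul_nonneg (ha i).le (Int.fract_nonneg _)
    have := (Int.fract_lt_one ((m : ℝ) ^ α)).le
    have := (Int.fract_nonneg ((m : ℝ) ^ α))
    rw [abs_le]; constructor <;> linarith
  have hma : (0 : ℝ) < (m : ℝ) ^ α := Real.rpow_pos_of_pos hm0 α
  have e2 : ∑ i, a i * ((k i : ℝ) / m) ^ α - 1
      = (∑ i, a i * (k i : ℝ) ^ α - (m : ℝ) ^ α) * (m : ℝ) ^ (-α) := by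
    rw [Real.rpow_neg hm0.le, sub_mul, mul_inv_cancel₀ hma.ne', Finset.sum_mul]
    congr 1
    refine Finset.sum_congr rfl fun i _ => ?_
    rw [Real.div_rpow (Nat.cast_nonneg _) hm0.le]; field_simp
  rw [e2, abs_mul, abs_of_pos (Real.rpow_pos_of_pos hm0 (-α))]
  refine mul_le_mul key ?_ (Real.rpow_nonneg hm0.le _) ((abs_nonneg _).trans key)
  exact Real.rpow_le_rpow_of_exponent_le hm1 (by linarith)

lemma SolSet_bound {n : ℕ} {a : Fin n → ℝ} (ha : ∀ i, 0 < a i) {s : ℝ} (hs : 1 ≤ s) {t : ℝ} :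
    ∃ K : ℕ, 1 ≤ K ∧ ∀ (m : ℕ) (k : Fin n → ℕ) (α : ℝ), α ∈ SolSet n a s t m k →
      ∀ i, k i ≤ K * m := by
  refine ⟨1 + ∑ i, ⌈2 / a i⌉₊, by omega, ?_⟩
  rintro m k α ⟨⟨h1, h2⟩, hm, hk, he, -⟩ i
  have hm0 : (0 : ℝ) < m := by exact_mod_cast hm
  have hk1 : ∀ j, (1 : ℝ) ≤ (k j : ℝ) ^ α := fun j =>
    Real.one_le_rpow (by exact_mod_cast hk j) (by linarith)
  have hf1 : ∀ j, (1 : ℝ) ≤ ((⌊(k j : ℝ) ^ α⌋ : ℤ) : ℝ) := fun j => by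
    have : (1 : ℤ) ≤ ⌊(k j : ℝ) ^ α⌋ := Int.le_floor.2 (by simpa using hk1 j)
    exact_mod_cast this
  have h3 : a i * ((⌊(k i : ℝ) ^ α⌋ : ℤ) : ℝ) ≤ (m : ℝ) ^ α := by
    refine le_trans ?_ (Int.floor_le _)
    rw [he]
    exact Finset.single_le_sum (f := fun j => a j * ((⌊(k j : ℝ) ^ α⌋ : ℤ) : ℝ))
      (fun j _ => mul_nonneg (ha j).le (by linarith [hf1 j])) (Finset.mem_univ i)
  have h4 : (k i : ℝ) ^ α ≤ 2 * ((⌊(k i : ℝ) ^ α⌋ : ℤ) : ℝ) := by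
    linarith [hf1 i, Int.lt_floor_add_one ((k i : ℝ) ^ α)]
  set K : ℕ := 1 + ∑ i, ⌈2 / a i⌉₊ with hK
  have hK1 : (1 : ℝ) ≤ K := by rw [hK]; push_cast; linarith [Finset.sum_nonneg (s := Finset.univ) (f := fun i => ((⌈2 / a i⌉₊ : ℕ) : ℝ)) (fun i _ => Nat.cast_nonneg _)]
  have hK2 : 2 / a i ≤ K := by
    refine (Nat.le_ceil _).trans ?_
    have : ⌈2 / a i⌉₊ ≤ ∑ i, ⌈2 / a i⌉₊ :=
      Finset.single_le_sum (f := fun i => ⌈2 / a i⌉₊) (fun _ _ => Nat.zero_le _) (Finset.mem_univ i)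
    exact_mod_cast this.trans (by omega)
  have h5 : (k i : ℝ) ^ α ≤ ((K * m : ℕ) : ℝ) ^ α := by
    push_cast
    rw [Real.mul_rpow (by positivity) hm0.le]
    have hKa : (K : ℝ) ≤ (K : ℝ) ^ α := Real.self_le_rpow_of_one_le hK1 (by linarith)
    have h6 : (k i : ℝ) ^ α ≤ 2 / a i * (m : ℝ) ^ α := by
      rw [div_mul_eq_mul_div, le_div_iff₀ (ha i)]
      nlinarith [ha i]
    refine h6.trans (mul_le_mul_of_nonneg_right (hK2.trans hKa) (Real.rpow_nonneg hm0.le _))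
  have h7 := (Real.rpow_le_rpow_iff (Nat.cast_nonneg _) (Nat.cast_nonneg _) (by linarith : 0 < α)).1 h5
  exact_mod_cast h7

/-- Hausdorff-Cantelli -/
lemma hausdorff_cantelli {ι : Type*} [Countable ι] (T : ι → Set ℝ) {σ : ℝ} (hσ : 0 < σ)
    (hT : ∑' i, Metric.ediam (T i) ^ σ ≠ ⊤) (E : Set ℝ)
    (hE : ∀ x ∈ E, {i | x ∈ T i}.Infinite) : dimH E ≤ ENNReal.ofReal σ := by
  have htail := ENNReal.tendsto_tsum_compl_atTop_zero hT
  have h := Measure.hausdorffMeasure_le_liminf_tsum (X := ℝ) (β := Finset ι)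
    (ι := fun F => {x // x ∉ F}) σ E (l := Filter.atTop)
    (fun F => (∑' i : {x // x ∉ F}, Metric.ediam (T i) ^ σ) ^ (1 / σ))
    (by
      have := (ENNReal.continuous_rpow_const (y := 1 / σ)).tendsto 0 |>.comp htail
      rw [ENNReal.zero_rpow_of_pos (by positivity)] at this
      exact this)
    (fun F i => T i)
    (Filter.Eventually.of_forall fun F i => by
      rw [one_div, ENNReal.le_rpow_inv_iff hσ]
      exact ENNReal.le_tsum (f := fun i : {x // x ∉ F} => Metric.ediam (T i) ^ σ) i)
    (Filter.Eventually.of_forall fun F x hx => by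
      obtain ⟨i, hi, hiF⟩ := (hE x hx).exists_notMem_finset F
      exact Set.mem_iUnion.2 ⟨⟨i, hiF⟩, hi⟩)
  rw [htail.liminf_eq] at h
  have h0 : (Measure.hausdorffMeasure (Real.toNNReal σ : ℝ) : Measure ℝ) E ≠ ⊤ := by
    rw [Real.coe_toNNReal _ hσ.le]
    exact (h.trans_lt ENNReal.zero_lt_top).ne
  exact dimH_le_of_hausdorffMeasure_ne_top h0

lemma exists_delta {n : ℕ} (a : Fin n → ℝ) : ∃ δ : ℝ, 0 < δ ∧ ∀ M : Finset (Fin n),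
    ∑ i ∈ M, a i ≠ 1 → δ ≤ |1 - ∑ i ∈ M, a i| := by
  classical
  obtain ⟨M, hM, hmin⟩ := Finset.exists_min_image
    (Finset.univ.filter fun M : Finset (Fin n) => ∑ i ∈ M, a i ≠ 1)
    (fun M => |1 - ∑ i ∈ M, a i|) ⟨∅, by simp⟩
  refine ⟨|1 - ∑ i ∈ M, a i|, ?_, fun M' hM' => hmin M' (by simpa using hM')⟩
  rw [Finset.mem_filter] at hM
  exact abs_pos.2 (sub_ne_zero.2 hM.2.symm)

lemma SolSet_mass {n : ℕ} {a : Fin n → ℝ} (ha : ∀ i, 0 < a i) {s t : ℝ} (hs : 1 ≤ s) {m : ℕ}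
    {k : Fin n → ℕ} {δ : ℝ} (hδ : 0 < δ)
    (hδM : ∀ M : Finset (Fin n), ∑ i ∈ M, a i ≠ 1 → δ ≤ |1 - ∑ i ∈ M, a i|)
    (hm : (1 + ∑ i, a i) * (m : ℝ) ^ (-s) ≤ δ / 2)
    {β : ℝ} (h : β ∈ SolSet n a s t m k) :
    δ / 2 ≤ ∑ i ∈ Finset.univ.filter (fun i => k i ≠ m), a i * ((k i : ℝ) / m) ^ β := by
  have hc := (SolSet_close ha h).trans hm
  obtain ⟨⟨h1, h2⟩, hm1, hk, he, hnt⟩ := h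
  have hm0 : (0 : ℝ) < m := by exact_mod_cast hm1
  have hsplit := fun f : Fin n → ℝ =>
    Finset.sum_filter_add_sum_filter_not Finset.univ (fun i => k i = m) f
  have hne : ∑ i ∈ Finset.univ.filter (fun i => k i = m), a i ≠ 1 := by
    intro hsum
    rw [← hsplit] at he
    have e1 : ∑ i ∈ Finset.univ.filter (fun i => k i = m), a i * ((⌊(k i : ℝ) ^ β⌋ : ℤ) : ℝ)
        = ((⌊(m : ℝ) ^ β⌋ : ℤ) : ℝ) := by
      rw [← one_mul ((⌊(m : ℝ) ^ β⌋ : ℤ) : ℝ), ← hsum, Finset.sum_mul]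
      refine Finset.sum_congr rfl fun i hi => ?_
      rw [(Finset.mem_filter.1 hi).2]
    rw [e1] at he
    have e2 : ∑ i ∈ Finset.univ.filter (fun i => ¬ k i = m),
        a i * ((⌊(k i : ℝ) ^ β⌋ : ℤ) : ℝ) = 0 := by linarith
    have hpos : ∀ i, 0 < a i * ((⌊(k i : ℝ) ^ β⌋ : ℤ) : ℝ) := fun i => by
      have h1k : (1 : ℝ) ≤ (k i : ℝ) ^ β :=
        Real.one_le_rpow (by exact_mod_cast hk i) (by linarith)
      have : (0 : ℤ) < ⌊(k i : ℝ) ^ β⌋ := Int.floor_pos.2 h1k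
      exact mul_pos (ha i) (by exact_mod_cast this)
    have e3 : ∀ i, k i = m := by
      intro i
      by_contra hi
      have := (Finset.sum_eq_zero_iff_of_nonneg (fun j _ => (hpos j).le)).1 e2 i
        (by simp [hi])
      exact (hpos i).ne' this
    refine hnt ⟨?_, fun i => by rw [e3 i]⟩
    rw [← hsum]
    exact (Finset.sum_congr (by ext i; simp [e3 i]) fun _ _ => rfl)
  have hd := hδM _ hne
  rw [← hsplit] at hc
  have e1 : ∑ i ∈ Finset.univ.filter (fun i => k i = m), a i * ((k i : ℝ) / m) ^ β
      = ∑ i ∈ Finset.univ.filter (fun i => k i = m), a i := by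
    refine Finset.sum_congr rfl fun i hi => ?_
    rw [(Finset.mem_filter.1 hi).2, div_self hm0.ne', Real.one_rpow, mul_one]
  rw [e1] at hc
  have hnn : 0 ≤ ∑ i ∈ Finset.univ.filter (fun i => ¬ k i = m), a i * ((k i : ℝ) / m) ^ β :=
    Finset.sum_nonneg fun i _ => mul_nonneg (ha i).le (by positivity)
  rw [abs_le] at hc
  rcases le_abs.1 hd with h' | h'
  · change _ ≤ ∑ i ∈ Finset.univ.filter (fun i => ¬ k i = m), a i * ((k i : ℝ) / m) ^ β
    linarith [hc.1]
  · linarith [hc.2]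

lemma exp_three (L α β γ η : ℝ) (hη : 0 ≤ η) (h1 : η ≤ β - α) (h2 : η ≤ γ - β) :
    Real.exp (L * β) * (L ^ 2 / 2 * ((β - α) * (γ - β) * η)) ≤
      Real.exp (L * α) * (γ - β) + Real.exp (L * γ) * (β - α) - Real.exp (L * β) * (γ - α) := by
  have eα : Real.exp (L * α) = Real.exp (L * β) * Real.exp (L * (α - β)) := by
    rw [← Real.exp_add]; ring_nf
  have eγ : Real.exp (L * γ) = Real.exp (L * β) * Real.exp (L * (γ - β)) := by
    rw [← Real.exp_add]; ring_nf
  rw [eα, eγ, mul_assoc (Real.exp (L * β)), mul_assoc (Real.exp (L * β)), ← mul_add, ← mul_sub]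
  refine mul_le_mul_of_nonneg_left ?_ (Real.exp_pos _).le
  set p := β - α with hp
  set q := γ - β with hq
  have e1 : α - β = -p := by rw [hp]; ring
  have e2 : γ - α = p + q := by rw [hp, hq]; ring
  rw [e1, e2]
  have hp0 : 0 ≤ p := hη.trans h1
  have hq0 : 0 ≤ q := hη.trans h2
  have hpq : 0 ≤ p * q := mul_nonneg hp0 hq0
  rcases le_total 0 L with hL | hL
  · have a1 := Real.add_one_le_exp (L * -p)
    have a2 := Real.quadratic_le_exp_of_nonneg (mul_nonneg hL hq0)
    have b1 := mul_le_mul_of_nonneg_right a1 hq0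
    have b2 := mul_le_mul_of_nonneg_right a2 hp0
    have b3 : L ^ 2 / 2 * (p * q * η) ≤ L ^ 2 / 2 * (p * q * q) := by gcongr
    nlinarith
  · have a1 := Real.add_one_le_exp (L * q)
    have a2 := Real.quadratic_le_exp_of_nonneg (x := L * -p) (by nlinarith)
    have b1 := mul_le_mul_of_nonneg_right a1 hp0
    have b2 := mul_le_mul_of_nonneg_right a2 hq0
    have b3 : L ^ 2 / 2 * (p * q * η) ≤ L ^ 2 / 2 * (p * q * p) := by gcongr
    nlinarith

lemma log_lower {k m K : ℕ} (hK : 1 ≤ K) (hk : 1 ≤ k) (hm : 1 ≤ m) (hkm : k ≠ m)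
    (hb : k ≤ K * m) : (1 / ((K : ℝ) * m)) ^ 2 ≤ Real.log ((k : ℝ) / m) ^ 2 := by
  have hm0 : (0 : ℝ) < m := by exact_mod_cast hm
  have hk0 : (0 : ℝ) < k := by exact_mod_cast hk
  have hK0 : (1 : ℝ) ≤ K := by exact_mod_cast hK
  have hb' : (k : ℝ) ≤ K * m := by exact_mod_cast hb
  have hKm : (m : ℝ) ≤ K * m := by nlinarith
  rw [sq_le_sq, abs_of_pos (by positivity : 0 < 1 / ((K : ℝ) * m))]
  rcases lt_or_gt_of_ne hkm with h | h
  · have h' : (k : ℝ) + 1 ≤ m := by exact_mod_cast h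
    have := Real.log_le_sub_one_of_pos (div_pos hk0 hm0)
    refine le_trans ?_ (neg_le_abs _)
    have h3 : 1 / ((K : ℝ) * m) ≤ 1 / m := by gcongr
    have h4 : (k : ℝ) / m + 1 / m ≤ 1 := by rw [← add_div, div_le_one hm0]; exact h'
    linarith
  · have h' : (m : ℝ) + 1 ≤ k := by exact_mod_cast h
    have := Real.log_le_sub_one_of_pos (div_pos hm0 hk0)
    have h5 : Real.log ((k : ℝ) / m) = - Real.log ((m : ℝ) / k) := by
      rw [← Real.log_inv, inv_div]
    refine le_trans ?_ (le_abs_self _)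
    have h3 : 1 / ((K : ℝ) * m) ≤ 1 / k := by gcongr
    have h4 : (m : ℝ) / k + 1 / k ≤ 1 := by rw [← add_div, div_le_one hk0]; exact h'
    linarith

/-- three points of the solution set cannot be all far apart -/
lemma SolSet_three {n : ℕ} {a : Fin n → ℝ} (ha : ∀ i, 0 < a i) {s t : ℝ} (hs : 1 ≤ s) {m : ℕ}
    {k : Fin n → ℕ} {δ : ℝ} (hδ : 0 < δ)
    (hδM : ∀ M : Finset (Fin n), ∑ i ∈ M, a i ≠ 1 → δ ≤ |1 - ∑ i ∈ M, a i|)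
    (hm : (1 + ∑ i, a i) * (m : ℝ) ^ (-s) ≤ δ / 2)
    {K : ℕ} (hK : 1 ≤ K) (hb : ∀ i, k i ≤ K * m)
    {α β γ η : ℝ} (hα : α ∈ SolSet n a s t m k) (hβ : β ∈ SolSet n a s t m k)
    (hγ : γ ∈ SolSet n a s t m k) (hη : 0 < η) (h1 : η ≤ β - α) (h2 : η ≤ γ - β) :
    η ^ 2 ≤ 16 * (1 + ∑ i, a i) * K ^ 2 / δ * ((m : ℝ) ^ 2 * (m : ℝ) ^ (-s)) := by
  have hmass := SolSet_mass ha hs hδ hδM hm hβ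
  have cα := SolSet_close ha hα
  have cβ := SolSet_close ha hβ
  have cγ := SolSet_close ha hγ
  set ε := (1 + ∑ i, a i) * (m : ℝ) ^ (-s) with hε
  obtain ⟨-, hm1, hk, -, -⟩ := hβ
  have hm0 : (0 : ℝ) < m := by exact_mod_cast hm1
  have hK0 : (0 : ℝ) < K := by exact_mod_cast hK
  have hr : ∀ i, 0 < (k i : ℝ) / m := fun i => div_pos (by exact_mod_cast hk i) hm0
  set p := β - α with hp
  set q := γ - β with hq
  have hp0 : 0 < p := hη.trans_le h1
  have hq0 : 0 < q := hη.trans_le h2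
  have e2 : γ - α = p + q := by rw [hp, hq]; ring
  have A : (δ / 2) * ((1 / ((K : ℝ) * m)) ^ 2 / 2 * (p * q * η)) ≤
      ∑ i, a i * (((k i : ℝ) / m) ^ β * (Real.log ((k i : ℝ) / m) ^ 2 / 2 * (p * q * η))) := by
    refine (mul_le_mul_of_nonneg_right hmass (by positivity)).trans ?_
    rw [Finset.sum_mul]
    refine le_trans (Finset.sum_le_sum fun i hi => ?_)
      (Finset.sum_le_sum_of_subset_of_nonneg (Finset.filter_subset _ _) fun i _ _ => ?_)
    · rw [mul_assoc]
      have := log_lower hK (hk i) hm1 (Finset.mem_filter.1 hi).2 (hb i)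
      have := (ha i).le
      gcongr
    · have := (ha i).le
      have := (Real.rpow_pos_of_pos (hr i) β).le
      positivity
  have B : ∑ i, a i * (((k i : ℝ) / m) ^ β * (Real.log ((k i : ℝ) / m) ^ 2 / 2 * (p * q * η))) ≤
      (∑ i, a i * ((k i : ℝ) / m) ^ α) * q + (∑ i, a i * ((k i : ℝ) / m) ^ γ) * p
        - (∑ i, a i * ((k i : ℝ) / m) ^ β) * (p + q) := by
    rw [Finset.sum_mul, Finset.sum_mul, Finset.sum_mul, ← Finset.sum_add_distrib,
      ← Finset.sum_sub_distrib]
    refine Finset.sum_le_sum fun i _ => ?_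
    have := exp_three (Real.log ((k i : ℝ) / m)) α β γ η hη.le h1 h2
    rw [← Real.rpow_def_of_pos (hr i), ← Real.rpow_def_of_pos (hr i),
      ← Real.rpow_def_of_pos (hr i), e2] at this
    have := mul_le_mul_of_nonneg_left this (ha i).le
    linarith
  have C : (∑ i, a i * ((k i : ℝ) / m) ^ α) * q + (∑ i, a i * ((k i : ℝ) / m) ^ γ) * p
        - (∑ i, a i * ((k i : ℝ) / m) ^ β) * (p + q) ≤ 2 * ε * (p + q) := by
    rw [abs_le] at cα cβ cγ
    nlinarith [cα.2, cβ.1, cγ.2]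
  have D := A.trans (B.trans C)
  have E : (δ / 2) * ((1 / ((K : ℝ) * m)) ^ 2 / 2 * ((η * (p + q) / 2) * η)) ≤ 2 * ε * (p + q) := by
    refine le_trans ?_ D
    have : η * (p + q) / 2 ≤ p * q := by nlinarith
    gcongr
  have F : (δ / 2) * ((1 / ((K : ℝ) * m)) ^ 2 / 2 * (η ^ 2 / 2)) ≤ 2 * ε := by
    refine le_of_mul_le_mul_right ?_ (by positivity : 0 < p + q)
    linarith
  have G : δ * η ^ 2 ≤ 16 * ε * (K ^ 2 * (m : ℝ) ^ 2) := by
    have hKm : 0 < (K : ℝ) ^ 2 * (m : ℝ) ^ 2 := by positivity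
    have : (δ / 2) * ((1 / ((K : ℝ) * m)) ^ 2 / 2 * (η ^ 2 / 2))
      = δ * η ^ 2 / 8 / ((K : ℝ) ^ 2 * (m : ℝ) ^ 2) := by field_simp; norm_num
    rw [this, div_le_iff₀ hKm] at F
    linarith
  rw [div_mul_eq_mul_div, le_div_iff₀ hδ]
  calc η ^ 2 * δ = δ * η ^ 2 := by ring
    _ ≤ _ := G
    _ = _ := by rw [hε]; ring

lemma cover_gen {n : ℕ} {a : Fin n → ℝ} (ha : ∀ i, 0 < a i) {s t : ℝ} (hs : 2 ≤ s)
    (hst : s < t) :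
    ∃ C : ℝ, 0 < C ∧ ∀ (m : ℕ) (k : Fin n → ℕ), ∃ P Q : Set ℝ, SolSet n a s t m k ⊆ P ∪ Q ∧
      (∀ x ∈ P, ∀ y ∈ P, dist x y ≤ C * (m : ℝ) ^ (-(s / 2 - 1))) ∧
      (∀ x ∈ Q, ∀ y ∈ Q, dist x y ≤ C * (m : ℝ) ^ (-(s / 2 - 1))) := by
  obtain ⟨δ, hδ, hδM⟩ := exists_delta a
  obtain ⟨K, hK, hb⟩ := SolSet_bound ha (by linarith : 1 ≤ s) (t := t)
  have hK0 : (0 : ℝ) < K := by exact_mod_cast hK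
  have hD : 0 < 1 + ∑ i, a i := by
    have := Finset.sum_nonneg (s := Finset.univ) fun i _ => (ha i).le
    linarith
  set D := 1 + ∑ i, a i with hDdef
  set B := 16 * D * K ^ 2 / δ with hB
  have hB0 : 0 < B := by positivity
  have hts : 0 < t - s := by linarith
  set C := (B + 1) + (t - s) * (2 * D / δ) with hC
  have hC1 : B + 1 ≤ C := by rw [hC]; linarith [(by positivity : 0 < (t - s) * (2 * D / δ))]
  have hC2 : (t - s) * (2 * D / δ) ≤ C := by rw [hC]; linarith
  have hC0 : 0 < C := by linarith
  refine ⟨C, hC0, fun m k => ?_⟩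
  rcases (SolSet n a s t m k).eq_empty_or_nonempty with hemp | ⟨x₀, hx₀⟩
  · exact ⟨∅, ∅, by simp [hemp], by simp, by simp⟩
  have hm1 := hx₀.2.1
  have hm0 : (0 : ℝ) < m := by exact_mod_cast hm1
  have hm1' : (1 : ℝ) ≤ m := by exact_mod_cast hm1
  have hbk := hb m k x₀ hx₀
  set η := C * (m : ℝ) ^ (-(s / 2 - 1)) with hη
  have hη0 : 0 < η := by positivity
  by_cases hm : D * (m : ℝ) ^ (-s) ≤ δ / 2
  · refine ⟨{β | β ∈ SolSet n a s t m k ∧ ∀ α ∈ SolSet n a s t m k, β - α ≤ η},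
      {β | β ∈ SolSet n a s t m k ∧ ∀ γ ∈ SolSet n a s t m k, γ - β ≤ η}, ?_, ?_, ?_⟩
    · intro β hβ
      by_contra hcon
      rw [Set.mem_union, not_or] at hcon
      simp only [Set.mem_ofPred_eq, hβ, true_and, not_forall, not_le] at hcon
      obtain ⟨⟨α, hα, h1⟩, ⟨γ, hγ, h2⟩⟩ := hcon
      have := SolSet_three ha (by linarith) hδ hδM hm hK hbk hα hβ hγ hη0 h1.le h2.le
      have e : η ^ 2 = C ^ 2 * ((m : ℝ) ^ 2 * (m : ℝ) ^ (-s)) := by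
        rw [hη, mul_pow, ← Real.rpow_natCast _ 2, ← Real.rpow_natCast (m : ℝ) 2,
          ← Real.rpow_natCast _ 2, ← Real.rpow_mul hm0.le, ← Real.rpow_add hm0]
        congr 2; push_cast; ring
      rw [e] at this
      have := le_of_mul_le_mul_right this (by positivity)
      nlinarith
    · rintro x ⟨hx, hx'⟩ y ⟨hy, hy'⟩
      rw [Real.dist_eq, abs_le]; constructor <;> linarith [hx' y hy, hy' x hx]
    · rintro x ⟨hx, hx'⟩ y ⟨hy, hy'⟩
      rw [Real.dist_eq, abs_le]; constructor <;> linarith [hx' y hy, hy' x hx]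
  · have hle : t - s ≤ η := by
      rw [not_le] at hm
      have e1 : (m : ℝ) ^ (-s) ≤ (m : ℝ) ^ (-(s / 2 - 1)) :=
        Real.rpow_le_rpow_of_exponent_le hm1' (by linarith)
      calc t - s = (t - s) * (2 * D / δ) * (δ / (2 * D)) := by field_simp
        _ ≤ C * (m : ℝ) ^ (-(s / 2 - 1)) := by
            refine mul_le_mul hC2 (le_trans ?_ e1) (by positivity) hC0.le
            rw [div_le_iff₀ (by positivity)]; linarith
    refine ⟨Set.Icc s t, ∅, fun x hx => Or.inl hx.1, ?_, by simp⟩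
    intro x hx y hy
    exact (Real.dist_le_of_mem_Icc hx hy).trans hle

lemma abs_log_le {x : ℝ} (hx : |x - 1| ≤ 1 / 2) : |Real.log x| ≤ 2 * |x - 1| := by
  have h := abs_le.1 hx
  have hx0 : 0 < x := by linarith [h.1]
  have h1 := Real.log_le_sub_one_of_pos hx0
  have h2 := Real.one_sub_inv_le_log_of_pos hx0
  rw [abs_le]
  constructor
  · have h3 : 1 - x⁻¹ = (x - 1) * x⁻¹ := by field_simp
    have h4 : x⁻¹ ≤ 2 := by
      rw [inv_le_comm₀ hx0 (by norm_num)]; linarith [h.1]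
    have h5 : |(x - 1) * x⁻¹| ≤ |x - 1| * 2 := by
      rw [abs_mul, abs_of_pos (inv_pos.2 hx0)]
      gcongr
    linarith [neg_abs_le ((x - 1) * x⁻¹)]
  · linarith [le_abs_self (x - 1), abs_nonneg (x - 1)]

lemma cover_one {a : Fin 1 → ℝ} (ha : ∀ i, 0 < a i) {s t : ℝ} (hs : 2 ≤ s)
    (hst : s < t) :
    ∃ C : ℝ, 0 < C ∧ ∀ (m : ℕ) (k : Fin 1 → ℕ), ∃ P Q : Set ℝ, SolSet 1 a s t m k ⊆ P ∪ Q ∧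
      (∀ x ∈ P, ∀ y ∈ P, dist x y ≤ C * (m : ℝ) ^ (-s)) ∧
      (∀ x ∈ Q, ∀ y ∈ Q, dist x y ≤ C * (m : ℝ) ^ (-s)) := by
  by_cases ha1 : a 0 = 1
  · refine ⟨1, one_pos, fun m k => ⟨∅, ∅, ?_, by simp, by simp⟩⟩
    rintro x ⟨-, -, -, he, hnt⟩
    exfalso
    simp only [Fin.sum_univ_one, Fin.forall_fin_one, ha1, one_mul, true_and] at he hnt
    exact hnt (by exact_mod_cast he.symm)
  have ha0 := ha 0
  set D := 1 + a 0 with hD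
  have hD0 : 0 < D := by positivity
  have hts : 0 < t - s := by linarith
  have ht0 : 0 < t := by linarith
  set l := |Real.log (a 0)| with hl
  have hl0 : 0 < l := abs_pos.2 (Real.log_ne_zero_of_pos_of_ne_one ha0 ha1)
  obtain ⟨θ, hθ0, hθ1, hθ2⟩ : ∃ θ : ℝ, 0 < θ ∧ θ ≤ 1 / 2 ∧ θ ≤ l / 4 :=
    ⟨min (1 / 2) (l / 4), by positivity, min_le_left _ _, min_le_right _ _⟩
  set C := 4 * D * (2 * t / l) + (t - s) * (D / θ) with hC
  have hC1 : 4 * D * (2 * t / l) ≤ C := by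
    rw [hC]; linarith [(by positivity : 0 < (t - s) * (D / θ))]
  have hC2 : (t - s) * (D / θ) ≤ C := by
    rw [hC]; linarith [(by positivity : 0 < 4 * D * (2 * t / l))]
  have hC0 : 0 < C := by positivity
  refine ⟨C, hC0, fun m k => ?_⟩
  by_cases hm : D * (m : ℝ) ^ (-s) ≤ θ
  · refine ⟨SolSet 1 a s t m k, ∅, by simp, ?_, by simp⟩
    have key : ∀ x ∈ SolSet 1 a s t m k,
        |Real.log (a 0) + x * Real.log ((k 0 : ℝ) / m)| ≤ 2 * (D * (m : ℝ) ^ (-s)) := by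
      intro x hx
      have hc := SolSet_close ha hx
      simp only [Fin.sum_univ_one] at hc
      rw [← hD] at hc
      obtain ⟨-, hm1, hk, -, -⟩ := hx
      have hr : 0 < (k 0 : ℝ) / m :=
        div_pos (by exact_mod_cast hk 0) (by exact_mod_cast hm1)
      have := abs_log_le ((hc.trans hm).trans hθ1)
      rw [Real.log_mul ha0.ne' (Real.rpow_pos_of_pos hr x).ne', Real.log_rpow hr] at this
      linarith
    intro x hx y hy
    have kx := key x hx
    have ky := key y hy
    set L := Real.log ((k 0 : ℝ) / m)
    have hL : l / 2 ≤ t * |L| := by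
      have h1 : l ≤ |Real.log (a 0) + x * L| + |x * L| := by
        have := abs_sub (Real.log (a 0) + x * L) (x * L)
        simpa using this
      have hx0 : 0 ≤ x := by linarith [hx.1.1]
      rw [abs_mul x, abs_of_nonneg hx0] at h1
      have : x * |L| ≤ t * |L| := mul_le_mul_of_nonneg_right hx.1.2 (abs_nonneg _)
      linarith
    have h3 : |x - y| * |L| ≤ 4 * (D * (m : ℝ) ^ (-s)) := by
      rw [← abs_mul]
      have e : (x - y) * L = (Real.log (a 0) + x * L) - (Real.log (a 0) + y * L) := by ring
      rw [e]
      refine (abs_sub _ _).trans ?_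
      linarith
    rw [Real.dist_eq]
    have hms : 0 ≤ (m : ℝ) ^ (-s) := Real.rpow_nonneg (Nat.cast_nonneg _) _
    refine le_trans ?_ (mul_le_mul_of_nonneg_right hC1 hms)
    have h4 : |x - y| * (l / 2) ≤ t * (4 * (D * (m : ℝ) ^ (-s))) := by
      calc |x - y| * (l / 2) ≤ |x - y| * (t * |L|) := by gcongr
        _ = t * (|x - y| * |L|) := by ring
        _ ≤ _ := by gcongr
    calc |x - y| = |x - y| * (l / 2) * (2 / l) := by field_simp
      _ ≤ t * (4 * (D * (m : ℝ) ^ (-s))) * (2 / l) := by gcongr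
      _ = _ := by ring
  · have hle : t - s ≤ C * (m : ℝ) ^ (-s) := by
      rw [not_le] at hm
      calc t - s = (t - s) * (D / θ) * (θ / D) := by field_simp
        _ ≤ C * (m : ℝ) ^ (-s) := by
            refine mul_le_mul hC2 ?_ (by positivity) hC0.le
            rw [div_le_iff₀ (by positivity)]; linarith
    refine ⟨Set.Icc s t, ∅, fun x hx => Or.inl hx.1, ?_, by simp⟩
    intro x hx y hy
    exact (Real.dist_le_of_mem_Icc hx hy).trans hle

lemma assemble {n : ℕ} {a : Fin n → ℝ} (ha : ∀ i, 0 < a i) {s t σ τ C : ℝ} (hs : 1 ≤ s)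
    (hσ : 0 < σ) (hC : 0 < C) (hτ : (n : ℝ) + 1 < τ * σ)
    (hcov : ∀ (m : ℕ) (k : Fin n → ℕ), ∃ P Q : Set ℝ, SolSet n a s t m k ⊆ P ∪ Q ∧
      (∀ x ∈ P, ∀ y ∈ P, dist x y ≤ C * (m : ℝ) ^ (-τ)) ∧
      (∀ x ∈ Q, ∀ y ∈ Q, dist x y ≤ C * (m : ℝ) ^ (-τ))) :
    dimH {α ∈ Set.Icc s t |
      {sol : ℤ × (Fin n → ℤ) |
        sol.1 ∈ PS α ∧ (∀ i, sol.2 i ∈ PS α) ∧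
        (sol.1 : ℝ) = ∑ i, a i * (sol.2 i : ℝ) ∧
        ¬(∑ i, a i = 1 ∧ ∀ i, sol.2 i = sol.1)}.Infinite} ≤ ENNReal.ofReal σ := by
  obtain ⟨K, hK, hb⟩ := SolSet_bound ha hs (t := t)
  choose P Q hPQ hP hQ using hcov
  set T : (ℕ × (Fin n → ℕ)) × Bool → Set ℝ := fun i =>
    SolSet n a s t i.1.1 i.1.2 ∩ (if i.2 then P i.1.1 i.1.2 else Q i.1.1 i.1.2) with hT
  refine hausdorff_cantelli T hσ ?_ _ ?_
  · -- summability
    have hbound : ∀ m k b, Metric.ediam (T ((m, k), b)) ^ σ ≤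
        ENNReal.ofReal ((C * (m : ℝ) ^ (-τ)) ^ σ) := by
      intro m k b
      rw [← ENNReal.ofReal_rpow_of_nonneg (by positivity) hσ.le]
      refine ENNReal.rpow_le_rpow (Metric.ediam_le_of_forall_dist_le ?_) hσ.le
      rintro x ⟨-, hx⟩ y ⟨-, hy⟩
      cases b
      · exact hQ m k x (by simpa using hx) y (by simpa using hy)
      · exact hP m k x (by simpa using hx) y (by simpa using hy)
    have hzero : ∀ m k b, (m = 0 ∨ k ∉ Fintype.piFinset fun _ : Fin n => Finset.range (K * m + 1)) →
        Metric.ediam (T ((m, k), b)) ^ σ = 0 := by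
      intro m k b h
      have : T ((m, k), b) = ∅ := by
        rw [Set.eq_empty_iff_forall_notMem]
        rintro x ⟨hx, -⟩
        rcases h with h | h
        · have := hx.2.1
          simp only at this
          omega
        · refine h (Fintype.mem_piFinset.2 fun i => Finset.mem_range.2 ?_)
          have := hb m k x hx i
          omega
      rw [this, Metric.ediam_empty, ENNReal.zero_rpow_of_pos hσ]
    have hinner : ∀ m : ℕ, ∑' (k : Fin n → ℕ) (b : Bool), Metric.ediam (T ((m, k), b)) ^ σ ≤
        ENNReal.ofReal (2 * (K + 1) ^ n * C ^ σ * (m : ℝ) ^ ((n : ℝ) - τ * σ)) := by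
      intro m
      rcases Nat.eq_zero_or_pos m with h0 | hmpos
      · simp [hzero m _ _ (Or.inl h0)]
      have hm0 : (0 : ℝ) < m := by exact_mod_cast hmpos
      have hm1 : (1 : ℝ) ≤ m := by exact_mod_cast hmpos
      rw [tsum_eq_sum (s := Fintype.piFinset fun _ : Fin n => Finset.range (K * m + 1))
        (fun k hk => by simp [hzero m k _ (Or.inr hk)])]
      refine (Finset.sum_le_sum fun k _ => ?_ : _ ≤ ∑ k ∈ _,
        ENNReal.ofReal (2 * (C * (m : ℝ) ^ (-τ)) ^ σ)).trans ?_
      · rw [tsum_bool, two_mul, ENNReal.ofReal_add (by positivity) (by positivity)]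
        exact add_le_add (hbound _ _ _) (hbound _ _ _)
      · rw [Finset.sum_const, Fintype.card_piFinset_const, Finset.card_range, nsmul_eq_mul,
          ← ENNReal.ofReal_natCast, ← ENNReal.ofReal_mul (by positivity)]
        refine ENNReal.ofReal_le_ofReal ?_
        push_cast
        have e1 : ((K : ℝ) * m + 1) ^ n ≤ ((K + 1) * m) ^ n := by
          gcongr; linarith
        rw [Real.mul_rpow hC.le (by positivity), ← Real.rpow_mul hm0.le, sub_eq_add_neg,
          Real.rpow_add hm0, Real.rpow_natCast, neg_mul]
        calc _ ≤ ((K + 1 : ℝ) * m) ^ n * (2 * (C ^ σ * (m : ℝ) ^ (-(τ * σ)))) := by gcongr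
          _ = _ := by rw [mul_pow]; ring
    have hsplit : ∑' i, Metric.ediam (T i) ^ σ =
        ∑' (m : ℕ) (k : Fin n → ℕ) (b : Bool), Metric.ediam (T ((m, k), b)) ^ σ :=
      (ENNReal.tsum_prod (f := fun p b => Metric.ediam (T (p, b)) ^ σ)).trans
        (ENNReal.tsum_prod (f := fun m k => ∑' b : Bool, Metric.ediam (T ((m, k), b)) ^ σ))
    rw [hsplit]
    have hsum : Summable fun m : ℕ => 2 * (K + 1) ^ n * C ^ σ * (m : ℝ) ^ ((n : ℝ) - τ * σ) :=
      (Real.summable_nat_rpow.2 (by linarith)).mul_left _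
    refine ne_top_of_le_ne_top ?_ (ENNReal.tsum_le_tsum hinner)
    exact hsum.tsum_ofReal_ne_top
  · rintro α ⟨hα, hinf⟩ hfin
    refine hinf (Set.Finite.subset (hfin.image fun i =>
      ((⌊(i.1.1 : ℝ) ^ α⌋, fun j => ⌊(i.1.2 j : ℝ) ^ α⌋) : ℤ × (Fin n → ℤ))) ?_)
    rintro ⟨y, x⟩ ⟨⟨m, hm, hy⟩, hx, he, hnt⟩
    choose k hk hxk using hx
    simp only at hy hxk he hnt
    obtain rfl : x = fun j => ⌊(k j : ℝ) ^ α⌋ := funext hxk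
    subst hy
    have hmem : α ∈ SolSet n a s t m k := ⟨hα, hm, hk, he, hnt⟩
    rcases hPQ m k hmem with h | h
    · exact ⟨((m, k), true), ⟨hmem, by simpa using h⟩, rfl⟩
    · exact ⟨((m, k), false), ⟨hmem, by simpa using h⟩, rfl⟩

/-- For positive reals `a₁, …, aₙ` and `3n + 4 < s < t`, the set of `α ∈ [s, t]` for
which `y = a₁x₁ + ⋯ + aₙxₙ` has infinitely many non-trivial solutions in
`PS(α)^{n+1}` has Hausdorff dimension at most `3n/(s − 4)`. -/
theorem statement4 (n : ℕ) (hn : 1 ≤ n) (a : Fin n → ℝ) (ha : ∀ i, 0 < a i)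
    (s t : ℝ) (hs : 3 * (n : ℝ) + 4 < s) (hst : s < t) :
    dimH {α ∈ Set.Icc s t |
      {sol : ℤ × (Fin n → ℤ) |
        sol.1 ∈ PS α ∧ (∀ i, sol.2 i ∈ PS α) ∧
        (sol.1 : ℝ) = ∑ i, a i * (sol.2 i : ℝ) ∧
        ¬(∑ i, a i = 1 ∧ ∀ i, sol.2 i = sol.1)}.Infinite} ≤
      ENNReal.ofReal (3 * (n : ℝ) / (s - 4)) := by
  have hn1 : (1 : ℝ) ≤ n := by exact_mod_cast hn
  have hs4 : 0 < s - 4 := by linarith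
  have hσ : 0 < 3 * (n : ℝ) / (s - 4) := by positivity
  rcases Nat.lt_or_ge 1 n with h2 | h1
  · have h2' : (2 : ℝ) ≤ n := by exact_mod_cast h2
    obtain ⟨C, hC, hcov⟩ := cover_gen ha (by linarith : 2 ≤ s) hst
    refine assemble ha (by linarith) hσ hC ?_ hcov
    rw [mul_div_assoc', lt_div_iff₀ hs4]
    nlinarith
  · obtain rfl : n = 1 := le_antisymm h1 hn
    obtain ⟨C, hC, hcov⟩ := cover_one ha (by linarith : 2 ≤ s) hst
    refine assemble ha (by linarith) hσ hC ?_ hcov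
    rw [mul_div_assoc', lt_div_iff₀ hs4]
    push_cast
    linarith
end

section
/- For all real s, t with 3 < s < t, the Hausdorff dimension of the set A(s,t) = {α ∈ [s, t] : there are infinitely many triples (x, y, z) ∈ PS(α)³ with x + y = z} is at most 3/s. -/
open MeasureTheory

/-- Covering piece. -/
def PSE (s : ℝ) (c k a : ℕ) : Set ℝ :=
  {α : ℝ | s ≤ α ∧ ∃ b : ℕ, 1 ≤ a ∧ a ≤ b ∧ b + (k + 1) = c ∧
    |(a : ℝ) ^ α + (b : ℝ) ^ α - (c : ℝ) ^ α| < 2}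

lemma PSE_dist (s : ℝ) (hs : 3 < s) (c k a : ℕ) (α β : ℝ) (hα : α ∈ PSE s c k a)
    (hβ : β ∈ PSE s c k a) (hab : α ≤ β) :
    β - α ≤ 16 * (c : ℝ) ^ (1 - s) / (k + 1) := by
  obtain ⟨hsα, b, ha1, hab', hbc, h1⟩ := hα
  obtain ⟨hsβ, b', -, -, hbc', h2⟩ := hβ
  obtain rfl : b' = b := by omega
  have hc2 : (2 : ℝ) ≤ c := by exact_mod_cast (by omega : 2 ≤ c)
  have ha0 : (1 : ℝ) ≤ a := by exact_mod_cast ha1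
  have hab0 : (a : ℝ) ≤ b' := by exact_mod_cast hab'
  have hb0 : (0 : ℝ) < b' := by linarith
  have hc0 : (0 : ℝ) < c := by linarith
  have hbcR : (b' : ℝ) + (k + 1) = c := by exact_mod_cast hbc
  have hk0 : (0 : ℝ) < (k : ℝ) + 1 := by positivity
  have hbc1 : (b' : ℝ) < c := by linarith
  -- normalised inequality
  have key : ∀ γ : ℝ, s ≤ γ → |(a : ℝ) ^ γ + (b' : ℝ) ^ γ - (c : ℝ) ^ γ| < 2 →
      |((a : ℝ) / c) ^ γ + ((b' : ℝ) / c) ^ γ - 1| < 2 * (c : ℝ) ^ (-s) := by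
    intro γ hγ h
    have hcγ : (0 : ℝ) < (c : ℝ) ^ γ := Real.rpow_pos_of_pos hc0 _
    rw [Real.div_rpow (by linarith) hc0.le, Real.div_rpow hb0.le hc0.le]
    have e : (a : ℝ) ^ γ / (c : ℝ) ^ γ + (b' : ℝ) ^ γ / (c : ℝ) ^ γ - 1
        = ((a : ℝ) ^ γ + (b' : ℝ) ^ γ - (c : ℝ) ^ γ) * (c : ℝ) ^ (-γ) := by
      rw [Real.rpow_neg hc0.le]; field_simp
    rw [e, abs_mul, abs_of_pos (Real.rpow_pos_of_pos hc0 (-γ))]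
    have h3 : (c : ℝ) ^ (-γ) ≤ (c : ℝ) ^ (-s) :=
      Real.rpow_le_rpow_of_exponent_le (by linarith) (by linarith)
    have h4 := Real.rpow_pos_of_pos hc0 (-γ)
    nlinarith
  have k1 := abs_lt.1 (key α hsα h1)
  have k2 := abs_lt.1 (key β hsβ h2)
  have hcs : (c : ℝ) ^ (-s) ≤ 1 / 8 := by
    rw [Real.rpow_neg hc0.le, ← one_div]
    apply one_div_le_one_div_of_le (by norm_num)
    calc (8 : ℝ) = 2 ^ (3 : ℝ) := by norm_num
      _ ≤ 2 ^ s := Real.rpow_le_rpow_of_exponent_le (by norm_num) hs.le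
      _ ≤ _ := Real.rpow_le_rpow (by norm_num) hc2 (by linarith)
  have hmonoa : ((a : ℝ) / c) ^ β ≤ ((a : ℝ) / c) ^ α :=
    Real.rpow_le_rpow_of_exponent_ge (by positivity) (by rw [div_le_one hc0]; linarith) hab
  have hab2 : ((a : ℝ) / c) ^ β ≤ ((b' : ℝ) / c) ^ β :=
    Real.rpow_le_rpow (by positivity) (by gcongr) (by linarith)
  have hbβ : 1 / 4 ≤ ((b' : ℝ) / c) ^ β := by linarith [k2.1]
  have hq : (0 : ℝ) < (b' : ℝ) / c := by positivity
  have hlog : ((k : ℝ) + 1) / c ≤ -Real.log ((b' : ℝ) / c) := by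
    have := Real.log_le_sub_one_of_pos hq
    have e : (b' : ℝ) / c - 1 = -(((k : ℝ) + 1) / c) := by
      field_simp; linarith
    linarith
  have hexp : ((b' : ℝ) / c) ^ α = ((b' : ℝ) / c) ^ β * Real.exp ((β - α) * -Real.log ((b' : ℝ) / c)) := by
    rw [Real.rpow_def_of_pos hq, Real.rpow_def_of_pos hq, ← Real.exp_add]
    congr 1; ring
  have hexp2 := Real.add_one_le_exp ((β - α) * -Real.log ((b' : ℝ) / c))
  have hL : (β - α) * (((k : ℝ) + 1) / c) ≤ (β - α) * -Real.log ((b' : ℝ) / c) :=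
    mul_le_mul_of_nonneg_left hlog (by linarith)
  have hnn : 0 ≤ (β - α) * (((k : ℝ) + 1) / c) := mul_nonneg (by linarith) (by positivity)
  have hdiff : 1 / 4 * ((β - α) * (((k : ℝ) + 1) / c)) ≤ ((b' : ℝ) / c) ^ α - ((b' : ℝ) / c) ^ β := by
    rw [hexp]
    nlinarith
  have hfin : (β - α) * (((k : ℝ) + 1) / c) ≤ 16 * (c : ℝ) ^ (-s) := by linarith [k1.2, k2.1]
  rw [le_div_iff₀ hk0]
  have e2 : (c : ℝ) ^ (1 - s) = c * (c : ℝ) ^ (-s) := by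
    rw [sub_eq_add_neg, Real.rpow_add hc0, Real.rpow_one]
  rw [e2]
  have e3 : (β - α) * ((k : ℝ) + 1) = c * ((β - α) * (((k : ℝ) + 1) / c)) := by field_simp
  rw [e3]
  nlinarith

lemma PSE_diam (s : ℝ) (hs : 3 < s) (c k a : ℕ) :
    Metric.ediam (PSE s c k a) ≤ ENNReal.ofReal (16 * (c : ℝ) ^ (1 - s) / (k + 1)) := by
  apply Metric.ediam_le
  intro x hx y hy
  rw [edist_dist, Real.dist_eq]
  apply ENNReal.ofReal_le_ofReal
  rcases le_total x y with h | h
  · rw [abs_sub_comm, abs_of_nonneg (by linarith)]; exact PSE_dist s hs c k a x y hx hy h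
  · rw [abs_of_nonneg (by linarith)]; exact PSE_dist s hs c k a y x hy hx h

lemma PS_sum (σ : ℝ) (h0 : 0 < σ) (h1 : σ < 1) (c : ℕ) :
    ∑ k ∈ Finset.range c, ((k : ℝ) + 1) ^ (-σ) ≤ (c : ℝ) ^ (1 - σ) / (1 - σ) := by
  have hp : 0 < 1 - σ := by linarith
  induction c with
  | zero => simp [Real.zero_rpow hp.ne']
  | succ c ih =>
    rw [Finset.sum_range_succ]
    have hx : (0 : ℝ) < (c : ℝ) + 1 := by positivity
    have hB := rpow_one_add_le_one_add_mul_self (s := -1 / ((c : ℝ) + 1))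
      (by rw [le_div_iff₀ hx]; linarith [Nat.cast_nonneg (α := ℝ) c]) hp.le (by linarith : 1 - σ ≤ 1)
    have e : 1 + -1 / ((c : ℝ) + 1) = (c : ℝ) / (c + 1) := by field_simp; ring
    rw [e, Real.div_rpow (by positivity) hx.le,
      div_le_iff₀ (Real.rpow_pos_of_pos hx _)] at hB
    have e2 : ((c : ℝ) + 1) ^ (1 - σ) = (c + 1) * ((c : ℝ) + 1) ^ (-σ) := by
      rw [sub_eq_add_neg, Real.rpow_add hx, Real.rpow_one]
    have e3 : (1 + (1 - σ) * (-1 / ((c : ℝ) + 1))) * ((c : ℝ) + 1) ^ (1 - σ)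
       = ((c : ℝ) + 1) ^ (1 - σ) - (1 - σ) * ((c : ℝ) + 1) ^ (-σ) := by
      rw [e2]; field_simp; ring
    rw [e3] at hB
    push_cast
    rw [le_div_iff₀ hp] at ih ⊢
    linarith

lemma PS_cover (s t α : ℝ) (hs : 3 < s) (hα : α ∈ {α ∈ Set.Icc s t |
      {T : ℤ × ℤ × ℤ | T.1 ∈ PS α ∧ T.2.1 ∈ PS α ∧ T.2.2 ∈ PS α ∧
        T.1 + T.2.1 = T.2.2}.Infinite}) (n : ℕ) :
    ∃ c k a : ℕ, n ≤ c ∧ k < c ∧ a < c ∧ α ∈ PSE s c k a := by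
  obtain ⟨⟨hsα, -⟩, hinf⟩ := hα
  by_contra! hcon
  apply hinf
  have hα0 : 0 ≤ α := by linarith
  refine Set.Finite.subset (((Finset.range n ×ˢ Finset.range n ×ˢ Finset.range n).finite_toSet).image
    (fun p : ℕ × ℕ × ℕ => (⌊(p.1 : ℝ) ^ α⌋, ⌊(p.2.1 : ℝ) ^ α⌋, ⌊(p.2.2 : ℝ) ^ α⌋))) ?_
  rintro ⟨x, y, z⟩ ⟨⟨a, ha, hx⟩, ⟨b, hb, hy⟩, ⟨c, hc, hz⟩, hxyz⟩
  simp only at hx hy hz hxyz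
  have pos : ∀ m : ℕ, 1 ≤ m → 1 ≤ ⌊(m : ℝ) ^ α⌋ := by
    intro m hm
    rw [Int.le_floor]
    push_cast
    exact Real.one_le_rpow (by exact_mod_cast hm) hα0
  have mono : ∀ m l : ℕ, ⌊(m : ℝ) ^ α⌋ < ⌊(l : ℝ) ^ α⌋ → m < l := by
    intro m l h
    by_contra! h'
    exact absurd (Int.floor_le_floor (Real.rpow_le_rpow (by positivity)
      (by exact_mod_cast h' : (l : ℝ) ≤ m) hα0)) (not_le.2 h)
  have hac : a < c := mono a c (by have := pos b hb; omega)
  have hbc : b < c := mono b c (by have := pos a ha; omega)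
  have habs : |(a : ℝ) ^ α + (b : ℝ) ^ α - (c : ℝ) ^ α| < 2 := by
    have h1 := Int.floor_le ((a : ℝ) ^ α)
    have h2 := Int.lt_floor_add_one ((a : ℝ) ^ α)
    have h3 := Int.floor_le ((b : ℝ) ^ α)
    have h4 := Int.lt_floor_add_one ((b : ℝ) ^ α)
    have h5 := Int.floor_le ((c : ℝ) ^ α)
    have h6 := Int.lt_floor_add_one ((c : ℝ) ^ α)
    rw [← hx] at h1 h2
    rw [← hy] at h3 h4
    rw [← hz] at h5 h6
    have h7 : (x : ℝ) + y = z := by exact_mod_cast hxyz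
    rw [abs_lt]; constructor <;> linarith
  have hcn : c < n := by
    by_contra! hn
    rcases le_total a b with h | h
    · exact hcon c (c - b - 1) a hn (by omega) hac ⟨hsα, b, ha, h, by omega, habs⟩
    · exact hcon c (c - a - 1) b hn (by omega) hbc ⟨hsα, a, hb, h, by omega, by
        rwa [add_comm ((b : ℝ) ^ α)]⟩
  refine ⟨(a, b, c), ?_, by simp [hx, hy, hz]⟩
  simp only [Finset.coe_product, Finset.coe_range, Set.mem_prod, Set.mem_Iio]
  omega

lemma PS_term (s σ : ℝ) (hs : 3 < s) (h0 : 0 < σ) (h1 : σ < 1) (c : ℕ) :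
    ∑ p : Fin c × Fin c, Metric.ediam (PSE s c p.1 p.2) ^ σ ≤
      ENNReal.ofReal ((16 : ℝ) ^ σ / (1 - σ) * (c : ℝ) ^ (2 - s * σ)) := by
  rcases Nat.eq_zero_or_pos c with rfl | hc
  · simp
  have hc0 : (0 : ℝ) < c := by exact_mod_cast hc
  calc ∑ p : Fin c × Fin c, Metric.ediam (PSE s c p.1 p.2) ^ σ
      ≤ ∑ p : Fin c × Fin c, ENNReal.ofReal ((16 * (c : ℝ) ^ (1 - s) / ((p.1 : ℕ) + 1)) ^ σ) := by
        apply Finset.sum_le_sum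
        intro p _
        rw [← ENNReal.ofReal_rpow_of_nonneg (by positivity) h0.le]
        exact ENNReal.rpow_le_rpow (PSE_diam s hs c p.1 p.2) h0.le
    _ = ENNReal.ofReal (∑ p : Fin c × Fin c, (16 * (c : ℝ) ^ (1 - s) / ((p.1 : ℕ) + 1)) ^ σ) := by
        rw [ENNReal.ofReal_sum_of_nonneg]
        intro p _; positivity
    _ ≤ _ := by
        apply ENNReal.ofReal_le_ofReal
        rw [Fintype.sum_prod_type]
        simp only [Finset.sum_const, Finset.card_univ, Fintype.card_fin, nsmul_eq_mul]
        rw [← Finset.mul_sum, Fin.sum_univ_eq_sum_range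
          (fun k : ℕ => (16 * (c : ℝ) ^ (1 - s) / ((k : ℝ) + 1)) ^ σ)]
        have e : ∀ k : ℕ, (16 * (c : ℝ) ^ (1 - s) / ((k : ℝ) + 1)) ^ σ
            = (16 : ℝ) ^ σ * (c : ℝ) ^ ((1 - s) * σ) * ((k : ℝ) + 1) ^ (-σ) := by
          intro k
          rw [Real.div_rpow (by positivity) (by positivity), Real.mul_rpow (by positivity)
            (by positivity), ← Real.rpow_mul hc0.le, Real.rpow_neg (by positivity), div_eq_mul_inv]
        simp only [e]
        rw [← Finset.mul_sum]
        have hS := PS_sum σ h0 h1 c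
        have e4 : (c : ℝ) ^ (2 - s * σ) = c * (c : ℝ) ^ ((1 - s) * σ) * (c : ℝ) ^ (1 - σ) := by
          nth_rewrite 2 [← Real.rpow_one (c : ℝ)]
          rw [← Real.rpow_add hc0, ← Real.rpow_add hc0]
          congr 1; ring
        rw [e4]
        calc _ ≤ (c : ℝ) * ((16 : ℝ) ^ σ * (c : ℝ) ^ ((1 - s) * σ) * ((c : ℝ) ^ (1 - σ) / (1 - σ))) := by
              gcongr
          _ = _ := by ring

/-- For `3 < s < t`, the Hausdorff dimension of
`A(s,t) = {α ∈ [s,t] : x + y = z has infinitely many solutions in PS(α)³}`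
is at most `3/s`. -/
theorem statement6 (s t : ℝ) (hs : 3 < s) (hst : s < t) :
    dimH {α ∈ Set.Icc s t |
      {T : ℤ × ℤ × ℤ | T.1 ∈ PS α ∧ T.2.1 ∈ PS α ∧ T.2.2 ∈ PS α ∧
        T.1 + T.2.1 = T.2.2}.Infinite} ≤ ENNReal.ofReal (3 / s) := by
  by_contra! hlt
  have hs0 : 0 < s := by linarith
  have h31 : ENNReal.ofReal (3 / s) < 1 := by
    rw [ENNReal.ofReal_lt_one, div_lt_one hs0]; exact hs
  obtain ⟨r, hr1, hr2⟩ := ENNReal.lt_iff_exists_nnreal_btwn.1 (lt_min hlt h31)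
  have hr3 := hr2.trans_le (min_le_left _ _)
  have hr4 : (r : ℝ) < 1 := by
    have := hr2.trans_le (min_le_right _ _)
    exact_mod_cast this
  have hr5 : 3 / s < r := by
    rw [← ENNReal.ofReal_coe_nnreal] at hr1
    exact (ENNReal.ofReal_lt_ofReal_iff_of_nonneg (by positivity)).1 hr1
  have hr0 : (0 : ℝ) < r := lt_trans (by positivity) hr5
  rw [div_lt_iff₀ hs0] at hr5
  refine absurd (dimH_le_of_hausdorffMeasure_ne_top (d := r) ?_) (not_le.2 hr3)
  set F : ℕ → ENNReal := fun c =>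
    ENNReal.ofReal ((16 : ℝ) ^ (r : ℝ) / (1 - r) * (c : ℝ) ^ (2 - s * (r : ℝ))) with hF
  have hFsum : ∑' c, F c ≠ ⊤ := by
    apply Summable.tsum_ofReal_ne_top
    apply Summable.mul_left
    rw [Real.summable_nat_rpow]
    nlinarith
  refine ne_top_of_le_ne_top hFsum ?_
  refine (Measure.hausdorffMeasure_le_liminf_tsum (β := ℕ)
    (ι := fun n => Σ m : ℕ, Fin (m + n) × Fin (m + n)) (r : ℝ) _ (l := Filter.atTop)
    (fun n => ENNReal.ofReal (16 * (n : ℝ) ^ (1 - s))) ?_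
    (fun n p => PSE s (p.1 + n) p.2.1 p.2.2) ?_ ?_).trans ?_
  · rw [← ENNReal.ofReal_zero]
    apply ENNReal.tendsto_ofReal
    have h := (tendsto_rpow_neg_atTop (by linarith : 0 < s - 1)).comp (tendsto_natCast_atTop_atTop (R := ℝ))
    have h2 := h.const_mul 16
    simpa [Function.comp_def] using h2
  · filter_upwards [Filter.eventually_ge_atTop 1] with n hn p
    refine (PSE_diam s hs _ _ _).trans (ENNReal.ofReal_le_ofReal ?_)
    have hn0 : (0 : ℝ) < n := by exact_mod_cast hn
    refine (div_le_self (by positivity) (by linarith [Nat.cast_nonneg (α := ℝ) (p.2.1 : ℕ)])).trans ?_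
    refine mul_le_mul_of_nonneg_left ?_ (by norm_num)
    apply Real.rpow_le_rpow_of_nonpos hn0 _ (by linarith)
    push_cast; linarith [Nat.cast_nonneg (α := ℝ) p.1]
  · refine Filter.Eventually.of_forall fun n α hα => ?_
    obtain ⟨c, k, a, hc, hk, ha, hm⟩ := PS_cover s t α hs hα n
    obtain ⟨m, rfl⟩ : ∃ m, c = m + n := ⟨c - n, by omega⟩
    exact Set.mem_iUnion.2 ⟨⟨m, ⟨k, hk⟩, ⟨a, ha⟩⟩, hm⟩
  · refine Filter.liminf_le_of_le (by isBoundedDefault) fun b hb => ?_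
    obtain ⟨n, hn⟩ := hb.exists
    refine hn.trans ?_
    rw [ENNReal.tsum_sigma']
    calc _ ≤ ∑' m : ℕ, F (m + n) := by
          apply ENNReal.tsum_le_tsum
          intro m
          rw [tsum_fintype]
          exact PS_term s r hs hr0 hr4 (m + n)
      _ ≤ _ := ENNReal.tsum_comp_le_tsum_of_injective (add_left_injective n) F
end
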